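/- For every θ > 0 there exist constants C > 0, R₀ > 0, ω₀ > 0 and P₀ > 0 with the following property: whenever R > R₀, ω ∈ (0, ω₀) and ω·R > P₀, and φ = (φ1, φ2) is a pair of C² functions on [−R, R] with φ1(±R) = φ2(±R) = 0 satisfying L_ω φ = g on (−R, R), and in addition the orthogonality condition ∫_{−R}^{R} (V1'(x)·g1(x) + V2'(x)·g2(x)) dx = 0 holds, then sup_{x ∈ [−R,R]} max(|φ1(x)|, |φ2(x)|) ≤ C · ‖g‖_{C⁰_θ((−R,R))}. -/

import Mathlib

/-!
Write `φ = (u, -v)`. With this sign the system is cooperative and `(a, b) = (V1', -V2')` is a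
positive solution of the homogeneous system at `ω = 0`. The ground state substitution `u = a σ`,
`v = b τ` turns the equation into an energy flux whose derivative dominates
`(a σ')² + (b τ')² + 2 V1 V2 a b (σ - τ)²`, up to the work of the source, which is at most of order
`N G`, where `N = ‖φ‖_∞` and `G = ‖g‖`. As the flux vanishes at `±R`, the solution `(u, v)` stays
within `O(√(N G)) (1 + |x|)` of a multiple `μ (a, b)`, whatever the value of `ω`.

To bound `μ`, consider the pairing `u a + v b`: up to terms that are integrable by the previous
step, its derivative is the derivative of `μ (V1 V2)²` plus a Wronskian whose derivative is
`ω²` times the pairing minus the source paired with `(a, b)`. Orthogonality makes the primitive of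
the latter decay at both ends, and convexity then shows that
`|μ| (a² + b² - (V1 V2)²) ≤ O(√(N G) + G)` at the origin. The factor on the left is the conserved
Hamiltonian of the profile, which is positive.

On a fixed compact core this bounds `φ` by `O(√(N G) + G)`; outside it an explicit supersolution
adds at most `O(G) + N / 4`, and `N` is absorbed by AM-GM.
-/

open Set

section Calculus

variable {F F' Φ Φ' : ℝ → ℝ} {p q : ℝ}

theorem le_of_hasDerivAt_nonneg (hpq : p ≤ q) (hF : ContinuousOn F (Icc p q))
    (hF' : ∀ x ∈ Ioo p q, HasDerivAt F (F' x) x) (h0 : ∀ x ∈ Ioo p q, 0 ≤ F' x) : F p ≤ F q := by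
  have hmono : MonotoneOn F (Icc p q) := by
    refine monotoneOn_of_hasDerivWithinAt_nonneg (f' := F') (convex_Icc p q) hF ?_ ?_ <;>
      rw [interior_Icc]
    exacts [fun x hx ↦ (hF' x hx).hasDerivWithinAt, h0]
  exact hmono (left_mem_Icc.2 hpq) (right_mem_Icc.2 hpq) hpq

theorem abs_sub_le_of_abs_deriv_le (hpq : p ≤ q) (hF : ContinuousOn F (Icc p q))
    (hΦ : ContinuousOn Φ (Icc p q)) (hF' : ∀ x ∈ Ioo p q, HasDerivAt F (F' x) x)
    (hΦ' : ∀ x ∈ Ioo p q, HasDerivAt Φ (Φ' x) x) (hle : ∀ x ∈ Ioo p q, |F' x| ≤ Φ' x) :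
    |F q - F p| ≤ Φ q - Φ p := by
  have hsub := le_of_hasDerivAt_nonneg hpq (hΦ.sub hF) (fun x hx ↦ (hΦ' x hx).sub (hF' x hx))
    fun x hx ↦ sub_nonneg.2 ((le_abs_self _).trans (hle x hx))
  have hadd := le_of_hasDerivAt_nonneg hpq (hΦ.add hF) (fun x hx ↦ (hΦ' x hx).add (hF' x hx))
    fun x hx ↦ by linarith [neg_abs_le (F' x), hle x hx]
  simp only [Pi.sub_apply, Pi.add_apply] at hsub hadd
  exact abs_le.2 ⟨by linarith, by linarith⟩

/- The quadratic `t ↦ t² x - 2 t F x + Φ x` has derivative at least `(t - F' x)² ≥ 0` in `x`,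
so its increment over `[p, q]` is a nonnegative quadratic in `t`. -/
theorem sq_sub_le_of_sq_deriv_le (hpq : p ≤ q) (hF : ContinuousOn F (Icc p q))
    (hΦ : ContinuousOn Φ (Icc p q)) (hF' : ∀ x ∈ Ioo p q, HasDerivAt F (F' x) x)
    (hΦ' : ∀ x ∈ Ioo p q, HasDerivAt Φ (Φ' x) x) (hle : ∀ x ∈ Ioo p q, F' x ^ 2 ≤ Φ' x) :
    (F q - F p) ^ 2 ≤ (q - p) * (Φ q - Φ p) := by
  have hquad : ∀ t : ℝ, 0 ≤ (q - p) * (t * t) + -2 * (F q - F p) * t + (Φ q - Φ p) := by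
    intro t
    have hinc : t ^ 2 * p - 2 * t * F p + Φ p ≤ t ^ 2 * q - 2 * t * F q + Φ q :=
      le_of_hasDerivAt_nonneg (F := fun x ↦ t ^ 2 * x - 2 * t * F x + Φ x) hpq (by fun_prop)
        (fun x hx ↦ (((hasDerivAt_id' x).const_mul (t ^ 2)).fun_sub
          ((hF' x hx).const_mul (2 * t))).fun_add (hΦ' x hx))
        fun x hx ↦ by nlinarith [hle x hx, sq_nonneg (t - F' x)]
    linarith
  have hdisc := discrim_le_zero hquad
  rw [discrim] at hdisc
  linarith

theorem hasDerivAt_exp_neg_mul (c x : ℝ) :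
    HasDerivAt (fun x ↦ Real.exp (-(c * x))) (-(c * Real.exp (-(c * x)))) x :=
  ((hasDerivAt_const_mul c).fun_neg.exp).congr_deriv (by ring)

theorem abs_le_exp_of_abs_deriv_le {c θ : ℝ} (hθ : 0 < θ) (hc : 0 ≤ c)
    (hF : ContinuousOn F (Icc p q)) (hF' : ∀ x ∈ Ioo p q, HasDerivAt F (F' x) x)
    (hq : F q = 0) (hle : ∀ x ∈ Ioo p q, |F' x| ≤ c * Real.exp (-(θ * x))) :
    ∀ x ∈ Icc p q, |F x| ≤ c / θ * Real.exp (-(θ * x)) := by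
  intro x hx
  have hinc := abs_sub_le_of_abs_deriv_le (Φ := fun y ↦ -(c / θ) * Real.exp (-(θ * y))) hx.2
    (hF.mono (Icc_subset_Icc_left hx.1)) (by fun_prop)
    (fun y hy ↦ hF' y (Ioo_subset_Ioo_left hx.1 hy))
    (fun y _ ↦ (hasDerivAt_exp_neg_mul θ y).const_mul _)
    fun y hy ↦ (hle y (Ioo_subset_Ioo_left hx.1 hy)).trans_eq (by field_simp)
  rw [hq, zero_sub, abs_neg] at hinc
  have : 0 ≤ c / θ * Real.exp (-(θ * q)) := by positivity
  linarith

theorem hasDerivAt_comp_neg {d x : ℝ} (h : HasDerivAt F d (-x)) :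
    HasDerivAt (fun y ↦ F (-y)) (-d) x := by
  simpa [Function.comp_def] using h.comp x (hasDerivAt_neg x)

theorem neg_mem_Icc_neg {R x : ℝ} (hx : x ∈ Icc (-R) R) : -x ∈ Icc (-R) R :=
  ⟨neg_le_neg hx.2, neg_le.1 hx.1⟩

theorem neg_mem_Ioo_neg {R x : ℝ} (hx : x ∈ Ioo (-R) R) : -x ∈ Ioo (-R) R :=
  ⟨neg_lt_neg hx.2, neg_lt.1 hx.1⟩

theorem continuousOn_comp_neg {R : ℝ} (h : ContinuousOn F (Icc (-R) R)) :
    ContinuousOn (fun y ↦ F (-y)) (Icc (-R) R) :=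
  h.comp continuous_neg.continuousOn fun _ ↦ neg_mem_Icc_neg

theorem hasDerivAt_primitive (hF : ContinuousOn F (Icc p q)) {x : ℝ} (hx : x ∈ Ioo p q) {c : ℝ}
    (hc : c ∈ Icc p q) : HasDerivAt (fun y ↦ ∫ t in c..y, F t) (F x) x :=
  intervalIntegral.integral_hasDerivAt_right
    ((hF.mono (uIcc_subset_Icc hc (Ioo_subset_Icc_self hx))).intervalIntegrable)
    ((hF.mono Ioo_subset_Icc_self).stronglyMeasurableAtFilter isOpen_Ioo x hx)
    (hF.continuousAt (Icc_mem_nhds hx.1 hx.2))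

theorem continuousOn_primitive_Icc (hF : ContinuousOn F (Icc p q)) {c : ℝ} (hc : c ∈ Icc p q) :
    ContinuousOn (fun y ↦ ∫ t in c..y, F t) (Icc p q) := by
  have hpq := hc.1.trans hc.2
  have hprim := intervalIntegral.continuousOn_primitive_interval'
    (hF.intervalIntegrable_of_Icc (μ := MeasureTheory.volume) hpq) (uIcc_of_le hpq ▸ hc)
  rwa [uIcc_of_le hpq] at hprim

theorem abs_le_exp_abs_of_abs_deriv_le {R c θ : ℝ} (hθ : 0 < θ) (hc : 0 ≤ c)
    (hF : ContinuousOn F (Icc (-R) R)) (hF' : ∀ x ∈ Ioo (-R) R, HasDerivAt F (F' x) x)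
    (hleft : F (-R) = 0) (hright : F R = 0)
    (hle : ∀ x ∈ Ioo (-R) R, |F' x| ≤ c * Real.exp (-(θ * |x|))) :
    ∀ x ∈ Icc (-R) R, |F x| ≤ c / θ * Real.exp (-(θ * |x|)) := by
  have hexp : ∀ x, c * Real.exp (-(θ * |x|)) ≤ c * Real.exp (-(θ * x)) := fun x ↦ by
    gcongr; exact le_abs_self x
  intro x hx
  rcases le_total 0 x with h0 | h0
  · rw [abs_of_nonneg h0]
    exact abs_le_exp_of_abs_deriv_le hθ hc hF hF' hright
      (fun y hy ↦ (hle y hy).trans (hexp y)) x hx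
  · rw [abs_of_nonpos h0]
    simpa using abs_le_exp_of_abs_deriv_le (F := fun y ↦ F (-y)) hθ hc (continuousOn_comp_neg hF)
      (fun y hy ↦ hasDerivAt_comp_neg (hF' _ (neg_mem_Ioo_neg hy))) hleft
      (fun y hy ↦ by simpa using (hle _ (neg_mem_Ioo_neg hy)).trans (abs_neg y ▸ hexp y))
      (-x) (neg_mem_Icc_neg hx)

theorem abs_primitive_le {R c d θ : ℝ} (hθ : 0 < θ) (hc : 0 ≤ c) (hd : 0 ≤ d)
    (hF : ContinuousOn F (Icc (-R) R))
    (hle : ∀ x ∈ Ioo (-R) R, |F x| ≤ c * Real.exp (-|x|) + d * Real.exp (-(θ * |x|))) :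
    ∀ x ∈ Icc (-R) R, |∫ t in (0)..x, F t| ≤ c + d / θ := by
  have hbound : ∀ {f : ℝ → ℝ}, ContinuousOn f (Icc (-R) R) →
      (∀ x ∈ Ioo (-R) R, |f x| ≤ c * Real.exp (-|x|) + d * Real.exp (-(θ * |x|))) →
      ∀ x ∈ Icc (-R) R, 0 ≤ x → |∫ t in (0)..x, f t| ≤ c + d / θ := by
    intro f hf hf_le x hx h0
    have hmem : (0 : ℝ) ∈ Icc (-R) R := ⟨neg_nonpos.2 (h0.trans hx.2), h0.trans hx.2⟩
    have hsub : Ioo 0 x ⊆ Ioo (-R) R := Ioo_subset_Ioo hmem.1 hx.2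
    have hinc := abs_sub_le_of_abs_deriv_le h0
      (Φ := fun y ↦ -c * Real.exp (-(1 * y)) + -(d / θ) * Real.exp (-(θ * y)))
      ((continuousOn_primitive_Icc hf hmem).mono (Icc_subset_Icc hmem.1 hx.2)) (by fun_prop)
      (fun y hy ↦ hasDerivAt_primitive hf (hsub hy) hmem)
      (fun y _ ↦ ((hasDerivAt_exp_neg_mul 1 y).const_mul _).fun_add
        ((hasDerivAt_exp_neg_mul θ y).const_mul _)) fun y hy ↦ by
          have hfy := hf_le y (hsub hy)
          rw [abs_of_pos hy.1] at hfy
          refine hfy.trans_eq ?_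
          rw [one_mul]
          field_simp
    simp only [intervalIntegral.integral_same, sub_zero, mul_zero, neg_zero, Real.exp_zero] at hinc
    have : 0 ≤ c * Real.exp (-(1 * x)) + d / θ * Real.exp (-(θ * x)) := by positivity
    linarith
  intro x hx
  rcases le_total 0 x with h0 | h0
  · exact hbound hF hle x hx h0
  · have hneg := hbound (continuousOn_comp_neg hF)
      (fun y hy ↦ by simpa using hle _ (neg_mem_Ioo_neg hy)) (-x) (neg_mem_Icc_neg hx)
      (neg_nonneg.2 h0)
    rwa [intervalIntegral.integral_comp_neg, neg_neg, neg_zero, intervalIntegral.integral_symm,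
      abs_neg] at hneg

end Calculus

section MaximumPrinciple

variable {z z' z'' y y' c k B B' B'' : ℝ → ℝ} {p q : ℝ}

/- A component of `{z > 0}` would be an interval on which `z` is convex and whose endpoint
values are nonpositive. -/
theorem nonpos_of_deriv2_nonneg_of_pos (hz : ContinuousOn z (Icc p q))
    (hz' : ∀ x ∈ Ioo p q, HasDerivAt z (z' x) x) (hz'' : ∀ x ∈ Ioo p q, HasDerivAt z' (z'' x) x)
    (hconv : ∀ x ∈ Ioo p q, 0 < z x → 0 ≤ z'' x) (hp : z p ≤ 0) (hq : z q ≤ 0) :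
    ∀ x ∈ Icc p q, z x ≤ 0 := by
  intro x hx
  by_contra! hzx
  have hcompact : ∀ s t, p ≤ s → t ≤ q → IsCompact (Icc s t ∩ z ⁻¹' Iic 0) := fun s t hs ht ↦
    isCompact_Icc.of_isClosed_subset ((hz.mono (Icc_subset_Icc hs ht)).preimage_isClosed_of_isClosed
      isClosed_Icc isClosed_Iic) inter_subset_left
  obtain ⟨s, ⟨hs, hzs⟩, hs_max⟩ := (hcompact p x le_rfl hx.2).exists_isGreatest
    ⟨p, left_mem_Icc.2 hx.1, hp⟩
  obtain ⟨t, ⟨ht, hzt⟩, ht_min⟩ := (hcompact x q hx.1 le_rfl).exists_isLeast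
    ⟨q, right_mem_Icc.2 hx.2, hq⟩
  have hsub : Ioo s t ⊆ Ioo p q := Ioo_subset_Ioo hs.1 ht.2
  have hpos : ∀ y ∈ Ioo s t, 0 < z y := by
    intro y hy
    by_contra! hzy
    rcases le_total y x with hyx | hxy
    · exact hy.1.not_ge (hs_max ⟨⟨hs.1.trans hy.1.le, hyx⟩, hzy⟩)
    · exact hy.2.not_ge (ht_min ⟨⟨hxy, hy.2.le.trans ht.2⟩, hzy⟩)
  have hconvex : ConvexOn ℝ (Icc s t) z := by
    refine convexOn_of_hasDerivWithinAt2_nonneg (f' := z') (f'' := z'') (convex_Icc s t)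
      (hz.mono (Icc_subset_Icc hs.1 ht.2)) ?_ ?_ ?_ <;> rw [interior_Icc]
    · exact fun y hy ↦ (hz' y (hsub hy)).hasDerivWithinAt
    · exact fun y hy ↦ (hz'' y (hsub hy)).hasDerivWithinAt
    · exact fun y hy ↦ hconv y (hsub hy) (hpos y hy)
  have hst : s ≤ t := hs.2.trans ht.1
  have hmax := hconvex.le_max_of_mem_Icc (left_mem_Icc.2 hst) (right_mem_Icc.2 hst) ⟨hs.2, ht.1⟩
  exact hzx.not_ge (hmax.trans (max_le hzs hzt))

theorem le_of_supersolution (hy : ContinuousOn y (Icc p q)) (hB : ContinuousOn B (Icc p q))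
    (hy' : ∀ x ∈ Ioo p q, HasDerivAt y (y' x) x)
    (hy'' : ∀ x ∈ Ioo p q, HasDerivAt y' (c x * y x - k x) x)
    (hB' : ∀ x ∈ Ioo p q, HasDerivAt B (B' x) x) (hB'' : ∀ x ∈ Ioo p q, HasDerivAt B' (B'' x) x)
    (hc : ∀ x ∈ Ioo p q, 0 ≤ c x) (hB0 : ∀ x ∈ Ioo p q, 0 ≤ B x)
    (hk : ∀ x ∈ Ioo p q, B'' x ≤ -k x) (hp : y p ≤ B p) (hq : y q ≤ B q) :
    ∀ x ∈ Icc p q, y x ≤ B x := by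
  intro x hx
  refine sub_nonpos.1 (nonpos_of_deriv2_nonneg_of_pos (hy.sub hB)
    (fun x hx ↦ (hy' x hx).sub (hB' x hx)) (fun x hx ↦ (hy'' x hx).sub (hB'' x hx))
    (fun x hx hpos ↦ ?_) (sub_nonpos.2 hp) (sub_nonpos.2 hq) x hx)
  have hyB : B x < y x := sub_pos.1 hpos
  linarith [hk x hx, mul_nonneg (hc x hx) ((hB0 x hx).trans hyB.le)]

theorem abs_le_of_supersolution (hy : ContinuousOn y (Icc p q)) (hB : ContinuousOn B (Icc p q))
    (hy' : ∀ x ∈ Ioo p q, HasDerivAt y (y' x) x)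
    (hy'' : ∀ x ∈ Ioo p q, HasDerivAt y' (c x * y x - k x) x)
    (hB' : ∀ x ∈ Ioo p q, HasDerivAt B (B' x) x) (hB'' : ∀ x ∈ Ioo p q, HasDerivAt B' (B'' x) x)
    (hc : ∀ x ∈ Ioo p q, 0 ≤ c x) (hB0 : ∀ x ∈ Ioo p q, 0 ≤ B x)
    (hk : ∀ x ∈ Ioo p q, B'' x ≤ -|k x|) (hp : |y p| ≤ B p) (hq : |y q| ≤ B q) :
    ∀ x ∈ Icc p q, |y x| ≤ B x := by
  intro x hx
  have hupper := le_of_supersolution hy hB hy' hy'' hB' hB'' hc hB0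
    (fun x hx ↦ (hk x hx).trans (neg_le_neg (le_abs_self _)))
    ((le_abs_self _).trans hp) ((le_abs_self _).trans hq) x hx
  have hlower := le_of_supersolution (y := -y) (k := -k) hy.neg hB (fun x hx ↦ (hy' x hx).neg)
    (fun x hx ↦ (hy'' x hx).neg.congr_deriv (by simp only [Pi.neg_apply]; ring)) hB' hB'' hc hB0
    (fun x hx ↦ (hk x hx).trans (neg_le_neg (neg_le_abs _)))
    ((neg_le_abs _).trans hp) ((neg_le_abs _).trans hq) x hx
  exact abs_le'.2 ⟨hupper, hlower⟩

end MaximumPrinciple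

/-- Two populations `V, W` solving `V'' = V W²`, `W'' = W V²` and segregating to the right and to
the left respectively. The monotonicity is recorded through `a = V'` and `b = -W'`, both
positive. -/
structure SegregatedProfile (V W a b : ℝ → ℝ) : Prop where
  hasDerivAt_V : ∀ x, HasDerivAt V (a x) x
  hasDerivAt_W : ∀ x, HasDerivAt W (-b x) x
  hasDerivAt_a : ∀ x, HasDerivAt a (V x * W x ^ 2) x
  hasDerivAt_b : ∀ x, HasDerivAt b (-(W x * V x ^ 2)) x
  V_pos : ∀ x, 0 < V x
  W_pos : ∀ x, 0 < W x
  a_pos : ∀ x, 0 < a x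
  b_pos : ∀ x, 0 < b x

namespace SegregatedProfile

variable {V W a b : ℝ → ℝ} (hP : SegregatedProfile V W a b)
include hP

theorem reflect :
    SegregatedProfile (fun x ↦ W (-x)) (fun x ↦ V (-x)) (fun x ↦ b (-x)) (fun x ↦ a (-x)) where
  hasDerivAt_V x := by simpa using hasDerivAt_comp_neg (hP.hasDerivAt_W (-x))
  hasDerivAt_W x := hasDerivAt_comp_neg (hP.hasDerivAt_V (-x))
  hasDerivAt_a x := by simpa using hasDerivAt_comp_neg (hP.hasDerivAt_b (-x))
  hasDerivAt_b x := hasDerivAt_comp_neg (hP.hasDerivAt_a (-x))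
  V_pos x := hP.W_pos (-x)
  W_pos x := hP.V_pos (-x)
  a_pos x := hP.b_pos (-x)
  b_pos x := hP.a_pos (-x)

theorem continuous_V : Continuous V :=
  continuous_iff_continuousAt.2 fun x ↦ (hP.hasDerivAt_V x).continuousAt

theorem continuous_W : Continuous W :=
  continuous_iff_continuousAt.2 fun x ↦ (hP.hasDerivAt_W x).continuousAt

theorem continuous_a : Continuous a :=
  continuous_iff_continuousAt.2 fun x ↦ (hP.hasDerivAt_a x).continuousAt

theorem continuous_b : Continuous b :=
  continuous_iff_continuousAt.2 fun x ↦ (hP.hasDerivAt_b x).continuousAt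

theorem monotone_V : Monotone V :=
  monotone_of_hasDerivAt_nonneg hP.hasDerivAt_V fun x ↦ (hP.a_pos x).le

theorem antitone_W : Antitone W :=
  antitone_of_hasDerivAt_nonpos hP.hasDerivAt_W fun x ↦ neg_nonpos.2 (hP.b_pos x).le

theorem monotone_a : Monotone a :=
  monotone_of_hasDerivAt_nonneg hP.hasDerivAt_a fun x ↦
    mul_nonneg (hP.V_pos x).le (sq_nonneg _)

theorem antitone_b : Antitone b :=
  antitone_of_hasDerivAt_nonpos hP.hasDerivAt_b fun x ↦
    neg_nonpos.2 (mul_nonneg (hP.W_pos x).le (sq_nonneg _))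

theorem mul_le_V {x : ℝ} (hx : 0 ≤ x) : a 0 * x ≤ V x := by
  have hinc := le_of_hasDerivAt_nonneg (F := fun y ↦ V y - a 0 * y) hx
    (by have := hP.continuous_V; fun_prop)
    (fun y _ ↦ (hP.hasDerivAt_V y).fun_sub (hasDerivAt_const_mul (a 0)))
    fun y hy ↦ sub_nonneg.2 (hP.monotone_a hy.1.le)
  linarith [hP.V_pos 0]

/- Where `V ≥ k`, the function `q = k W + W'` satisfies `q' ≥ k q`. Were it positive somewhere it
would grow exponentially, whereas `q ≤ k W`. -/
theorem mul_W_le_b {k x : ℝ} (hk : 0 < k) (hV : k ≤ V x) : k * W x ≤ b x := by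
  by_contra! hq
  set d := k * W x - b x with hd
  have hdpos : 0 < d := sub_pos.2 hq
  set y := x + W x / d
  have hxy : x ≤ y := le_add_of_nonneg_right (div_nonneg (hP.W_pos x).le hdpos.le)
  have hgrow := le_of_hasDerivAt_nonneg (F := fun t ↦ (k * W t - b t) * Real.exp (-(k * t))) hxy
    (by have := hP.continuous_W; have := hP.continuous_b; fun_prop)
    (fun t _ ↦ ((((hP.hasDerivAt_W t).const_mul k).fun_sub (hP.hasDerivAt_b t)).fun_mul
      (hasDerivAt_exp_neg_mul k t)).congr_deriv
        (g' := W t * (V t ^ 2 - k ^ 2) * Real.exp (-(k * t))) (by ring))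
    fun t ht ↦ by
      have hVt : k ^ 2 ≤ V t ^ 2 := pow_le_pow_left₀ hk.le (hV.trans (hP.monotone_V ht.1.le)) 2
      exact mul_nonneg (mul_nonneg (hP.W_pos t).le (sub_nonneg.2 hVt)) (Real.exp_pos _).le
  have hexp : d * Real.exp (k * (y - x)) ≤ k * W y - b y := by
    rw [← hd, show -(k * x) = k * (y - x) + -(k * y) by ring, Real.exp_add, ← mul_assoc] at hgrow
    exact le_of_mul_le_mul_right hgrow (Real.exp_pos _)
  have hlin : d * (k * (y - x) + 1) = k * W x + d := by simp only [y]; field_simp; ring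
  have hWy : k * W y ≤ k * W x := mul_le_mul_of_nonneg_left (hP.antitone_W hxy) hk.le
  have := mul_le_mul_of_nonneg_left (Real.add_one_le_exp (k * (y - x))) hdpos.le
  linarith [hP.b_pos y]

theorem exists_W_le_exp {k : ℝ} (hk : 0 < k) :
    ∃ C > 0, ∀ x, 0 ≤ x → W x ≤ C * Real.exp (-(k * x)) := by
  set x₀ := k / a 0
  have hx₀ : 0 ≤ x₀ := div_nonneg hk.le (hP.a_pos 0).le
  have hV : ∀ x, x₀ ≤ x → k ≤ V x := fun x hx ↦
    ((div_le_iff₀' (hP.a_pos 0)).1 hx).trans (hP.mul_le_V (hx₀.trans hx))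
  have hdecr : ∀ x, x₀ ≤ x → W x * Real.exp (k * x) ≤ W x₀ * Real.exp (k * x₀) := by
    intro x hx
    refine neg_le_neg_iff.1 (le_of_hasDerivAt_nonneg (F := fun t ↦ -(W t * Real.exp (k * t))) hx
      (by have := hP.continuous_W; fun_prop)
      (fun t _ ↦ ((hP.hasDerivAt_W t).fun_mul (hasDerivAt_const_mul k).exp).fun_neg.congr_deriv
        (g' := (b t - k * W t) * Real.exp (k * t)) (by ring)) fun t ht ↦ ?_)
    exact mul_nonneg (sub_nonneg.2 (hP.mul_W_le_b hk (hV t ht.1.le))) (Real.exp_pos _).le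
  refine ⟨W 0 * Real.exp (k * x₀), mul_pos (hP.W_pos 0) (Real.exp_pos _), fun x hx ↦ ?_⟩
  suffices W x * Real.exp (k * x) ≤ W 0 * Real.exp (k * x₀) by
    rwa [Real.exp_neg, ← div_eq_mul_inv, le_div_iff₀ (Real.exp_pos _)]
  have hW0 := (hP.W_pos 0).le
  rcases le_total x₀ x with h | h
  · exact (hdecr x h).trans
      (mul_le_mul_of_nonneg_right (hP.antitone_W hx₀) (Real.exp_pos _).le)
  · have := hP.antitone_W hx
    gcongr

theorem V_le_exp {x : ℝ} (hx : 0 ≤ x) :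
    V x ≤ (V 0 + a 0) * Real.exp ((1 + W 0 ^ 2) * x) := by
  set j := 1 + W 0 ^ 2
  have hdecr := le_of_hasDerivAt_nonneg (F := fun t ↦ -((V t + a t) * Real.exp (-(j * t)))) hx
    (by have := hP.continuous_V; have := hP.continuous_a; fun_prop)
    (fun t _ ↦ (((hP.hasDerivAt_V t).fun_add (hP.hasDerivAt_a t)).fun_mul
      (hasDerivAt_exp_neg_mul j t)).fun_neg.congr_deriv
        (g' := (V t + W 0 ^ 2 * a t + V t * (W 0 ^ 2 - W t ^ 2)) * Real.exp (-(j * t)))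
        (by simp only [j]; ring))
    fun t ht ↦ by
      have hW : W t ^ 2 ≤ W 0 ^ 2 :=
        pow_le_pow_left₀ (hP.W_pos t).le (hP.antitone_W ht.1.le) 2
      have := hP.V_pos t
      have := hP.a_pos t
      have := sub_nonneg.2 hW
      positivity
  simp only [mul_zero, neg_zero, Real.exp_zero, mul_one, neg_le_neg_iff] at hdecr
  rw [Real.exp_neg, ← div_eq_mul_inv, div_le_iff₀ (Real.exp_pos _)] at hdecr
  linarith [hP.a_pos x]

theorem exists_decay_of_nonneg :
    ∃ C, ∀ x, 0 ≤ x → V x * W x * (1 + V x + W x) * (1 + x) ≤ C * Real.exp (-x) := by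
  set j := 1 + W 0 ^ 2
  obtain ⟨C, _, hW⟩ := hP.exists_W_le_exp (k := 2 * j + 2) (by positivity)
  have hV0 := hP.V_pos 0
  have hW0 := hP.W_pos 0
  have ha0 := hP.a_pos 0
  set c := (1 + V 0 + W 0) / V 0
  refine ⟨((V 0 + a 0) ^ 2 * C) * c, fun x hx ↦ ?_⟩
  have hV := hP.V_pos x
  have hWx := hP.W_pos x
  have hsq : V x ^ 2 * W x ≤ (V 0 + a 0) ^ 2 * C * Real.exp (-(2 * x)) := by
    calc V x ^ 2 * W x
        ≤ ((V 0 + a 0) * Real.exp (j * x)) ^ 2 * (C * Real.exp (-((2 * j + 2) * x))) := by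
          gcongr
          exacts [hP.V_le_exp hx, hW x hx]
      _ = (V 0 + a 0) ^ 2 * C * (Real.exp (j * x) ^ 2 * Real.exp (-((2 * j + 2) * x))) := by ring
      _ = (V 0 + a 0) ^ 2 * C * Real.exp (-(2 * x)) := by
          rw [← Real.exp_nat_mul, ← Real.exp_add]; ring_nf
  have hfactor : 1 + V x + W x ≤ V x * c := by
    have hVx : V 0 ≤ V x := hP.monotone_V hx
    rw [mul_div_assoc', le_div_iff₀ hV0]
    nlinarith [hP.antitone_W hx]
  have hone : 1 + x ≤ Real.exp x := by linarith [Real.add_one_le_exp x]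
  calc V x * W x * (1 + V x + W x) * (1 + x)
      ≤ V x * W x * (V x * c) * Real.exp x := by gcongr
    _ = V x ^ 2 * W x * c * Real.exp x := by ring
    _ ≤ (V 0 + a 0) ^ 2 * C * Real.exp (-(2 * x)) * c * Real.exp x := by gcongr
    _ = (V 0 + a 0) ^ 2 * C * c * (Real.exp (-(2 * x)) * Real.exp x) := by ring
    _ = (V 0 + a 0) ^ 2 * C * c * Real.exp (-x) := by rw [← Real.exp_add]; ring_nf

theorem exists_decay :
    ∃ K, ∀ x, V x * W x * (1 + V x + W x) * (1 + |x|) ≤ K * Real.exp (-|x|) := by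
  obtain ⟨C, hC⟩ := hP.exists_decay_of_nonneg
  obtain ⟨D, hD⟩ := hP.reflect.exists_decay_of_nonneg
  refine ⟨max C D, fun x ↦ ?_⟩
  rcases le_total 0 x with hx | hx
  · rw [abs_of_nonneg hx]
    exact (hC x hx).trans (by gcongr; exact le_max_left C D)
  · have hDx := hD (-x) (neg_nonneg.2 hx)
    rw [neg_neg] at hDx
    rw [abs_of_nonpos hx]
    calc V x * W x * (1 + V x + W x) * (1 + -x)
        = W x * V x * (1 + W x + V x) * (1 + -x) := by ring
      _ ≤ D * Real.exp (- -x) := by rwa [neg_neg]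
      _ ≤ max C D * Real.exp (- -x) := by gcongr; exact le_max_right C D

theorem mul_mul_one_add_le {K x : ℝ}
    (hK : V x * W x * (1 + V x + W x) * (1 + |x|) ≤ K * Real.exp (-|x|)) :
    V x * W x * (1 + |x|) ≤ K * Real.exp (-|x|) := by
  have hV := hP.V_pos x
  have hW := hP.W_pos x
  refine le_trans ?_ hK
  gcongr ?_ * _
  exact le_mul_of_one_le_right (by positivity) (by linarith)

theorem hamiltonian_eq (x y : ℝ) :
    a x ^ 2 + b x ^ 2 - (V x * W x) ^ 2 = a y ^ 2 + b y ^ 2 - (V y * W y) ^ 2 := by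
  refine is_const_of_deriv_eq_zero (f := fun x ↦ a x ^ 2 + b x ^ 2 - (V x * W x) ^ 2) ?_ ?_ x y
  all_goals have hderiv := fun x ↦ (((hP.hasDerivAt_a x).fun_pow 2).fun_add
    ((hP.hasDerivAt_b x).fun_pow 2)).fun_sub (((hP.hasDerivAt_V x).fun_mul
      (hP.hasDerivAt_W x)).fun_pow 2)
  · exact fun x ↦ (hderiv x).differentiableAt
  · intro x
    rw [(hderiv x).deriv]
    norm_num
    ring

/- As `x → ∞` the interaction `V W` vanishes while `a` is increasing. -/
theorem hamiltonian_pos (x : ℝ) : 0 < a x ^ 2 + b x ^ 2 - (V x * W x) ^ 2 := by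
  obtain ⟨K, hK⟩ := hP.exists_decay
  have ha0 := hP.a_pos 0
  set y := |K| / a 0
  have hy : 0 ≤ y := by positivity
  rw [hP.hamiltonian_eq x y]
  have hVW : V y * W y * (1 + y) ≤ |K| := by
    have hKy := hP.mul_mul_one_add_le (hK y)
    rw [abs_of_nonneg hy] at hKy
    refine hKy.trans ((mul_le_mul_of_nonneg_right (le_abs_self K) (Real.exp_pos _).le).trans ?_)
    exact mul_le_of_le_one_right (abs_nonneg K) (Real.exp_le_one_iff.2 (neg_nonpos.2 hy))
  have hlt : V y * W y < a y := by
    have hay : |K| = a 0 * y := by simp only [y]; field_simp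
    refine lt_of_lt_of_le ?_ (hP.monotone_a hy)
    exact lt_of_mul_lt_mul_right (by linarith) (by positivity : 0 ≤ 1 + y)
  have hsq : (V y * W y) ^ 2 < a y ^ 2 :=
    pow_lt_pow_left₀ hlt (mul_nonneg (hP.V_pos y).le (hP.W_pos y).le) two_ne_zero
  linarith [sq_nonneg (b y)]

end SegregatedProfile

/-- A segregated profile with an explicit constant `K` bounding its slopes and the exponential decay
of all its interaction terms `V W`, `V² W` and `V W²`. -/
structure BoundedProfile (V W a b : ℝ → ℝ) (K : ℝ) : Prop extends SegregatedProfile V W a b where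
  a_le : ∀ x, a x ≤ K
  b_le : ∀ x, b x ≤ K
  decay : ∀ x, V x * W x * (1 + V x + W x) * (1 + |x|) ≤ K * Real.exp (-|x|)

theorem SegregatedProfile.exists_boundedProfile {V W a b : ℝ → ℝ}
    (hP : SegregatedProfile V W a b) : ∃ K, BoundedProfile V W a b K := by
  obtain ⟨K, hK⟩ := hP.exists_decay
  set E := a 0 ^ 2 + b 0 ^ 2 - (V 0 * W 0) ^ 2
  have hslopes : ∀ x, a x ^ 2 + b x ^ 2 ≤ E + K ^ 2 := by
    intro x
    have hVWpos := mul_pos (hP.V_pos x) (hP.W_pos x)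
    have hVW : V x * W x * (1 + |x|) ≤ K * Real.exp (-|x|) := hP.mul_mul_one_add_le (hK x)
    have hK0 : 0 < K := pos_of_mul_pos_left (lt_of_lt_of_le (by positivity) hVW) (Real.exp_pos _).le
    have hVWK : V x * W x ≤ K := calc
      V x * W x ≤ V x * W x * (1 + |x|) := le_mul_of_one_le_right hVWpos.le (by simp)
      _ ≤ K * Real.exp (-|x|) := hVW
      _ ≤ K := mul_le_of_le_one_right hK0.le (by simp)
    linarith [pow_le_pow_left₀ hVWpos.le hVWK 2, hP.hamiltonian_eq x 0]
  have hEpos : 0 < E := hP.hamiltonian_pos 0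
  refine ⟨1 + E + K ^ 2 + |K|, hP, fun x ↦ ?_, fun x ↦ ?_, fun x ↦ (hK x).trans ?_⟩
  · nlinarith [hslopes x, sq_nonneg (a x - 1), sq_nonneg (b x), abs_nonneg K]
  · nlinarith [hslopes x, sq_nonneg (b x - 1), sq_nonneg (a x), abs_nonneg K]
  · gcongr
    linarith [le_abs_self K, sq_nonneg K]

namespace BoundedProfile

variable {V W a b : ℝ → ℝ} {K : ℝ} (hP : BoundedProfile V W a b K)
include hP

theorem reflect :
    BoundedProfile (fun x ↦ W (-x)) (fun x ↦ V (-x)) (fun x ↦ b (-x)) (fun x ↦ a (-x)) K where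
  toSegregatedProfile := hP.toSegregatedProfile.reflect
  a_le x := hP.b_le (-x)
  b_le x := hP.a_le (-x)
  decay x := by
    have hdecay := hP.decay (-x)
    rw [abs_neg] at hdecay
    refine le_of_eq_of_le ?_ hdecay
    ring

theorem K_pos : 0 < K := (hP.a_pos 0).trans_le (hP.a_le 0)

theorem V_mul_W_le (x : ℝ) : V x * W x ≤ K * Real.exp (-|x|) :=
  (le_mul_of_one_le_right (mul_nonneg (hP.V_pos x).le (hP.W_pos x).le) (by simp)).trans
    (hP.mul_mul_one_add_le (hP.decay x))

theorem V_mul_W_sq_le (x : ℝ) : V x * W x ^ 2 * (1 + |x|) ≤ K * Real.exp (-|x|) := by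
  have hV := hP.V_pos x
  have hW := hP.W_pos x
  refine le_trans ?_ (hP.decay x)
  gcongr ?_ * _
  nlinarith [mul_pos hV hW]

theorem W_mul_V_sq_le (x : ℝ) : W x * V x ^ 2 * (1 + |x|) ≤ K * Real.exp (-|x|) := by
  simpa using hP.reflect.V_mul_W_sq_le (-x)

end BoundedProfile

/-- A solution `φ = (u, -v)` of `L_ω φ = (f, -h)` on `(-R, R)` vanishing at `±R`, together with its
derivatives `u', v'`, a bound `N` for its supremum norm and a bound `G` for the norm of the source
weighted by `cosh (θ x)`. The sign change in the second component makes the system cooperative. -/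
structure LinearizedSolution (V W : ℝ → ℝ) (ω R θ G N : ℝ) (f h u u' v v' : ℝ → ℝ) : Prop where
  R_pos : 0 < R
  continuousOn_u : ContinuousOn u (Icc (-R) R)
  continuousOn_u' : ContinuousOn u' (Icc (-R) R)
  continuousOn_v : ContinuousOn v (Icc (-R) R)
  continuousOn_v' : ContinuousOn v' (Icc (-R) R)
  hasDerivAt_u : ∀ x ∈ Ioo (-R) R, HasDerivAt u (u' x) x
  hasDerivAt_u' : ∀ x ∈ Ioo (-R) R,
    HasDerivAt u' ((W x ^ 2 + ω ^ 2) * u x - (2 * (V x * W x) * v x + f x)) x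
  hasDerivAt_v : ∀ x ∈ Ioo (-R) R, HasDerivAt v (v' x) x
  hasDerivAt_v' : ∀ x ∈ Ioo (-R) R,
    HasDerivAt v' ((V x ^ 2 + ω ^ 2) * v x - (2 * (V x * W x) * u x + h x)) x
  u_left : u (-R) = 0
  u_right : u R = 0
  v_left : v (-R) = 0
  v_right : v R = 0
  abs_u_le : ∀ x ∈ Icc (-R) R, |u x| ≤ N
  abs_v_le : ∀ x ∈ Icc (-R) R, |v x| ≤ N
  abs_f_mul_cosh_le : ∀ x ∈ Ioo (-R) R, |f x| * Real.cosh (θ * x) ≤ G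
  abs_h_mul_cosh_le : ∀ x ∈ Ioo (-R) R, |h x| * Real.cosh (θ * x) ≤ G

theorem exp_abs_le_two_mul_cosh (θ x : ℝ) : Real.exp (θ * |x|) ≤ 2 * Real.cosh (θ * x) := by
  rw [← Real.cosh_abs (θ * x), abs_mul, Real.cosh_eq]
  have hθ : θ * |x| ≤ |θ| * |x| := mul_le_mul_of_nonneg_right (le_abs_self θ) (abs_nonneg x)
  linarith [Real.exp_le_exp.2 hθ, Real.exp_pos (-(|θ| * |x|))]

theorem le_exp_of_mul_cosh_le {y θ x G : ℝ} (hy : 0 ≤ y) (h : y * Real.cosh (θ * x) ≤ G) :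
    y ≤ 2 * G * Real.exp (-(θ * |x|)) := by
  rw [Real.exp_neg, ← div_eq_mul_inv, le_div_iff₀ (Real.exp_pos _)]
  linarith [mul_le_mul_of_nonneg_left (exp_abs_le_two_mul_cosh θ x) hy]

/-- The nonnegative part of the derivative of the energy flux: after the ground state substitution
`u = a σ`, `v = b τ` it is `(a σ')² + (b τ')² + 2 V W a b (σ - τ)²`. -/
noncomputable def dissipation (V W a b u u' v v' : ℝ → ℝ) (x : ℝ) : ℝ :=
  (u' x - V x * W x ^ 2 * u x / a x) ^ 2 + (v' x + W x * V x ^ 2 * v x / b x) ^ 2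
    + 2 * (V x * W x) * (a x * b x) * (u x / a x - v x / b x) ^ 2

/-- The flux `σ (a u' - a' u) + τ (b v' - b' v)` with `σ = u / a` and `τ = v / b`, corrected by a
primitive of `2 N G / cosh (θ x)` which absorbs the work of the source. -/
noncomputable def energyFlux (V W a b : ℝ → ℝ) (θ G N : ℝ) (u u' v v' : ℝ → ℝ) (x : ℝ) : ℝ :=
  u x / a x * (a x * u' x - V x * W x ^ 2 * u x) + v x / b x * (b x * v' x + W x * V x ^ 2 * v x)
    + 2 * N * G / θ * Real.arctan (Real.sinh (θ * x))

/-- The total amount of dissipation allowed by the source. -/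
noncomputable def dissipationBudget (θ G N : ℝ) : ℝ := 2 * Real.pi * N * G / θ

theorem hasDerivAt_arctan_sinh (θ x : ℝ) :
    HasDerivAt (fun x ↦ Real.arctan (Real.sinh (θ * x))) (θ / Real.cosh (θ * x)) x := by
  refine (hasDerivAt_const_mul θ).sinh.arctan.congr_deriv ?_
  rw [← Real.cosh_sq', ← mul_assoc]
  have := (Real.cosh_pos (θ * x)).ne'
  field_simp

theorem SegregatedProfile.dissipation_nonneg {V W a b : ℝ → ℝ} (hP : SegregatedProfile V W a b)
    (u u' v v' : ℝ → ℝ) (x : ℝ) : 0 ≤ dissipation V W a b u u' v v' x := by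
  have := hP.V_pos x
  have := hP.W_pos x
  have := hP.a_pos x
  have := hP.b_pos x
  unfold dissipation
  positivity

namespace LinearizedSolution

variable {V W a b : ℝ → ℝ} {ω R θ G N : ℝ} {f h u u' v v' : ℝ → ℝ}
  (hS : LinearizedSolution V W ω R θ G N f h u u' v v')
include hS

theorem reflect : LinearizedSolution (fun x ↦ W (-x)) (fun x ↦ V (-x)) ω R θ G N
    (fun x ↦ h (-x)) (fun x ↦ f (-x)) (fun x ↦ v (-x)) (fun x ↦ -v' (-x)) (fun x ↦ u (-x))
    (fun x ↦ -u' (-x)) where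
  R_pos := hS.R_pos
  continuousOn_u := continuousOn_comp_neg hS.continuousOn_v
  continuousOn_u' := (continuousOn_comp_neg hS.continuousOn_v').neg
  continuousOn_v := continuousOn_comp_neg hS.continuousOn_u
  continuousOn_v' := (continuousOn_comp_neg hS.continuousOn_u').neg
  hasDerivAt_u x hx := hasDerivAt_comp_neg (hS.hasDerivAt_v _ (neg_mem_Ioo_neg hx))
  hasDerivAt_u' x hx := (hasDerivAt_comp_neg (hS.hasDerivAt_v' _ (neg_mem_Ioo_neg hx))).fun_neg
    |>.congr_deriv (by ring)
  hasDerivAt_v x hx := hasDerivAt_comp_neg (hS.hasDerivAt_u _ (neg_mem_Ioo_neg hx))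
  hasDerivAt_v' x hx := (hasDerivAt_comp_neg (hS.hasDerivAt_u' _ (neg_mem_Ioo_neg hx))).fun_neg
    |>.congr_deriv (by ring)
  u_left := by rw [neg_neg, hS.v_right]
  u_right := hS.v_left
  v_left := by rw [neg_neg, hS.u_right]
  v_right := hS.u_left
  abs_u_le x hx := hS.abs_v_le _ (neg_mem_Icc_neg hx)
  abs_v_le x hx := hS.abs_u_le _ (neg_mem_Icc_neg hx)
  abs_f_mul_cosh_le x hx := by simpa using hS.abs_h_mul_cosh_le _ (neg_mem_Ioo_neg hx)
  abs_h_mul_cosh_le x hx := by simpa using hS.abs_f_mul_cosh_le _ (neg_mem_Ioo_neg hx)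

theorem zero_mem_Ioo : (0 : ℝ) ∈ Ioo (-R) R := ⟨neg_lt_zero.2 hS.R_pos, hS.R_pos⟩

theorem left_mem : -R ∈ Icc (-R) R := left_mem_Icc.2 (neg_le_self hS.R_pos.le)

theorem N_nonneg : 0 ≤ N := (abs_nonneg _).trans (hS.abs_u_le _ hS.left_mem)

theorem G_nonneg : 0 ≤ G :=
  (mul_nonneg (abs_nonneg _) (Real.cosh_pos _).le).trans (hS.abs_f_mul_cosh_le 0 hS.zero_mem_Ioo)

theorem abs_f_le {x : ℝ} (hx : x ∈ Ioo (-R) R) : |f x| ≤ 2 * G * Real.exp (-(θ * |x|)) :=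
  le_exp_of_mul_cosh_le (abs_nonneg _) (hS.abs_f_mul_cosh_le x hx)

theorem abs_h_le {x : ℝ} (hx : x ∈ Ioo (-R) R) : |h x| ≤ 2 * G * Real.exp (-(θ * |x|)) :=
  le_exp_of_mul_cosh_le (abs_nonneg _) (hS.abs_h_mul_cosh_le x hx)

theorem dissipationBudget_nonneg (hθ : 0 < θ) : 0 ≤ dissipationBudget θ G N := by
  have := hS.N_nonneg
  have := hS.G_nonneg
  unfold dissipationBudget
  positivity

theorem mul_le_div_cosh {y k x : ℝ} (hy : |y| ≤ N) (hk : |k| * Real.cosh (θ * x) ≤ G) :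
    y * k ≤ N * G / Real.cosh (θ * x) := by
  rw [mul_div_assoc]
  refine (le_abs_self _).trans (abs_mul y k ▸ mul_le_mul hy ?_ (abs_nonneg _) hS.N_nonneg)
  rwa [le_div_iff₀ (Real.cosh_pos _)]

theorem dissipation_le_deriv_energyFlux {x : ℝ} (hx : x ∈ Ioo (-R) R) :
    dissipation V W a b u u' v v' x ≤ dissipation V W a b u u' v v' x
      + ω ^ 2 * (u x ^ 2 + v x ^ 2)
      + ((N * G / Real.cosh (θ * x) - u x * f x) + (N * G / Real.cosh (θ * x) - v x * h x)) := by
  have hu := hS.mul_le_div_cosh (hS.abs_u_le x (Ioo_subset_Icc_self hx))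
    (hS.abs_f_mul_cosh_le x hx)
  have hv := hS.mul_le_div_cosh (hS.abs_v_le x (Ioo_subset_Icc_self hx))
    (hS.abs_h_mul_cosh_le x hx)
  have : 0 ≤ ω ^ 2 * (u x ^ 2 + v x ^ 2) := by positivity
  linarith

section Profile

variable (hP : SegregatedProfile V W a b)
include hP

theorem continuousOn_u_div_a : ContinuousOn (fun x ↦ u x / a x) (Icc (-R) R) :=
  hS.continuousOn_u.div hP.continuous_a.continuousOn fun x _ ↦ (hP.a_pos x).ne'

theorem continuousOn_v_div_b : ContinuousOn (fun x ↦ v x / b x) (Icc (-R) R) :=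
  hS.continuousOn_v.div hP.continuous_b.continuousOn fun x _ ↦ (hP.b_pos x).ne'

theorem hasDerivAt_u_div_a {x : ℝ} (hx : x ∈ Ioo (-R) R) :
    HasDerivAt (fun x ↦ u x / a x) ((u' x - V x * W x ^ 2 * u x / a x) / a x) x := by
  have ha := (hP.a_pos x).ne'
  exact ((hS.hasDerivAt_u x hx).fun_div (hP.hasDerivAt_a x) ha).congr_deriv (by field_simp)

theorem hasDerivAt_v_div_b {x : ℝ} (hx : x ∈ Ioo (-R) R) :
    HasDerivAt (fun x ↦ v x / b x) ((v' x + W x * V x ^ 2 * v x / b x) / b x) x := by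
  have hb := (hP.b_pos x).ne'
  exact ((hS.hasDerivAt_v x hx).fun_div (hP.hasDerivAt_b x) hb).congr_deriv (by field_simp; ring)

theorem continuousOn_energyFlux :
    ContinuousOn (energyFlux V W a b θ G N u u' v v') (Icc (-R) R) := by
  have hσ := hS.continuousOn_u_div_a hP
  have hτ := hS.continuousOn_v_div_b hP
  have := hS.continuousOn_u
  have := hS.continuousOn_u'
  have := hS.continuousOn_v
  have := hS.continuousOn_v'
  have := hP.continuous_a.continuousOn (s := Icc (-R) R)
  have := hP.continuous_b.continuousOn (s := Icc (-R) R)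
  have := hP.continuous_V.continuousOn (s := Icc (-R) R)
  have := hP.continuous_W.continuousOn (s := Icc (-R) R)
  have harctan : Continuous fun x ↦ Real.arctan (Real.sinh (θ * x)) :=
    Real.continuous_arctan.comp (Real.continuous_sinh.comp (continuous_const_mul θ))
  exact ((hσ.mul (by fun_prop)).add (hτ.mul (by fun_prop))).add
    (continuousOn_const.mul harctan.continuousOn)

theorem hasDerivAt_energyFlux (hθ : θ ≠ 0) {x : ℝ} (hx : x ∈ Ioo (-R) R) :
    HasDerivAt (energyFlux V W a b θ G N u u' v v')
      (dissipation V W a b u u' v v' x + ω ^ 2 * (u x ^ 2 + v x ^ 2)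
        + ((N * G / Real.cosh (θ * x) - u x * f x) + (N * G / Real.cosh (θ * x) - v x * h x)))
      x := by
  have ha := (hP.a_pos x).ne'
  have hb := (hP.b_pos x).ne'
  have hcosh := (Real.cosh_pos (θ * x)).ne'
  have hu := (hS.hasDerivAt_u_div_a hP hx).fun_mul (((hP.hasDerivAt_a x).fun_mul
    (hS.hasDerivAt_u' x hx)).fun_sub (((hP.hasDerivAt_V x).fun_mul
      ((hP.hasDerivAt_W x).fun_pow 2)).fun_mul (hS.hasDerivAt_u x hx)))
  have hv := (hS.hasDerivAt_v_div_b hP hx).fun_mul (((hP.hasDerivAt_b x).fun_mul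
    (hS.hasDerivAt_v' x hx)).fun_add (((hP.hasDerivAt_W x).fun_mul
      ((hP.hasDerivAt_V x).fun_pow 2)).fun_mul (hS.hasDerivAt_v x hx)))
  refine ((hu.fun_add hv).fun_add
    ((hasDerivAt_arctan_sinh θ x).const_mul (2 * N * G / θ))).congr_deriv ?_
  unfold dissipation
  field_simp
  ring

theorem energyFlux_le (hθ : 0 < θ) {p q : ℝ} (hp : -R ≤ p) (hpq : p ≤ q) (hq : q ≤ R) :
    energyFlux V W a b θ G N u u' v v' p ≤ energyFlux V W a b θ G N u u' v v' q :=
  le_of_hasDerivAt_nonneg hpq ((hS.continuousOn_energyFlux hP).mono (Icc_subset_Icc hp hq))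
    (fun _ hx ↦ hS.hasDerivAt_energyFlux hP hθ.ne' (Ioo_subset_Ioo hp hq hx))
    fun x hx ↦ (hP.dissipation_nonneg u u' v v' x).trans
      (hS.dissipation_le_deriv_energyFlux (Ioo_subset_Ioo hp hq hx))

theorem energyFlux_sub_le (hθ : 0 < θ) {p q : ℝ} (hp : -R ≤ p) (hpq : p ≤ q) (hq : q ≤ R) :
    energyFlux V W a b θ G N u u' v v' q - energyFlux V W a b θ G N u u' v v' p
      ≤ dissipationBudget θ G N := by
  have hleft := hS.energyFlux_le hP hθ le_rfl hp (hpq.trans hq)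
  have hright := hS.energyFlux_le hP hθ (hp.trans hpq) hq le_rfl
  have hc : 0 ≤ 2 * N * G / θ := by
    have := hS.N_nonneg
    have := hS.G_nonneg
    positivity
  have hlower := mul_le_mul_of_nonneg_left
    (Real.neg_pi_div_two_lt_arctan (Real.sinh (θ * -R))).le hc
  have hupper := mul_le_mul_of_nonneg_left
    (Real.arctan_lt_pi_div_two (Real.sinh (θ * R))).le hc
  simp only [energyFlux, hS.u_left, hS.v_left, hS.u_right, hS.v_right, zero_div, zero_mul,
    zero_add] at hleft hright ⊢
  have hbudget : dissipationBudget θ G N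
      = 2 * N * G / θ * (Real.pi / 2) - 2 * N * G / θ * -(Real.pi / 2) := by
    unfold dissipationBudget; ring
  linarith

theorem sq_sub_le_of_sq_deriv_le_dissipation (hθ : 0 < θ) {F F' : ℝ → ℝ} {p q : ℝ} (hp : -R ≤ p)
    (hpq : p ≤ q) (hq : q ≤ R) (hF : ContinuousOn F (Icc (-R) R))
    (hF' : ∀ x ∈ Ioo p q, HasDerivAt F (F' x) x)
    (hle : ∀ x ∈ Ioo p q, F' x ^ 2 ≤ dissipation V W a b u u' v v' x) :
    (F q - F p) ^ 2 ≤ (q - p) * dissipationBudget θ G N :=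
  (sq_sub_le_of_sq_deriv_le hpq (hF.mono (Icc_subset_Icc hp hq))
    ((hS.continuousOn_energyFlux hP).mono (Icc_subset_Icc hp hq)) hF'
    (fun _ hx ↦ hS.hasDerivAt_energyFlux hP hθ.ne' (Ioo_subset_Ioo hp hq hx)) fun x hx ↦
      (hle x hx).trans (hS.dissipation_le_deriv_energyFlux (Ioo_subset_Ioo hp hq hx))).trans
    (mul_le_mul_of_nonneg_left (hS.energyFlux_sub_le hP hθ hp hpq hq) (sub_nonneg.2 hpq))

theorem abs_u_div_a_sub_le (hθ : 0 < θ) {p q : ℝ} (hp : -R ≤ p) (hpq : p ≤ q) (hq : q ≤ R) :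
    a p * |u q / a q - u p / a p| ≤ √((q - p) * dissipationBudget θ G N) := by
  have hsq := hS.sq_sub_le_of_sq_deriv_le_dissipation hP hθ (F := fun x ↦ a p * (u x / a x)) hp hpq
    hq (continuousOn_const.mul (hS.continuousOn_u_div_a hP))
    (fun x hx ↦ (hS.hasDerivAt_u_div_a hP (Ioo_subset_Ioo hp hq hx)).const_mul (a p))
    fun x hx ↦ ?_
  · rw [← mul_sub] at hsq
    have habs := Real.abs_le_sqrt hsq
    rwa [abs_mul, abs_of_pos (hP.a_pos p)] at habs
  · have hap := hP.a_pos p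
    have hax := hP.a_pos x
    have hratio : (a p / a x) ^ 2 ≤ 1 :=
      pow_le_one₀ (by positivity) ((div_le_one hax).2 (hP.monotone_a hx.1.le))
    have hrest : 0 ≤ (v' x + W x * V x ^ 2 * v x / b x) ^ 2
        + 2 * (V x * W x) * (a x * b x) * (u x / a x - v x / b x) ^ 2 := by
      have := hP.V_pos x
      have := hP.W_pos x
      have := hP.b_pos x
      positivity
    calc (a p * ((u' x - V x * W x ^ 2 * u x / a x) / a x)) ^ 2
        = (a p / a x) ^ 2 * (u' x - V x * W x ^ 2 * u x / a x) ^ 2 := by ring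
      _ ≤ (u' x - V x * W x ^ 2 * u x / a x) ^ 2 :=
          mul_le_of_le_one_left (sq_nonneg _) hratio
      _ ≤ dissipation V W a b u u' v v' x := by unfold dissipation; linarith

theorem abs_v_div_b_sub_le (hθ : 0 < θ) {p q : ℝ} (hp : -R ≤ p) (hpq : p ≤ q) (hq : q ≤ R) :
    b q * |v q / b q - v p / b p| ≤ √((q - p) * dissipationBudget θ G N) := by
  have hreflect := hS.reflect.abs_u_div_a_sub_le hP.reflect hθ (neg_le_neg hq) (neg_le_neg hpq)
    (neg_le.1 hp)
  simp only [neg_neg] at hreflect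
  rwa [abs_sub_comm, show q - p = -p - -q by ring]

/- The mean value theorem on `[0, 1]` finds a point where the coupling term of the dissipation is at
most its budget. -/
theorem exists_coupling_le (hθ : 0 < θ) (hR : 1 ≤ R) :
    ∃ ξ ∈ Ioo (0 : ℝ) 1, 2 * (V 0 * W 1) * (a 0 * b 1) * (u ξ / a ξ - v ξ / b ξ) ^ 2
      ≤ dissipationBudget θ G N := by
  have hR0 : -R ≤ 0 := neg_nonpos.2 hS.R_pos.le
  have hIoo : Ioo (0 : ℝ) 1 ⊆ Ioo (-R) R := Ioo_subset_Ioo hR0 hR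
  obtain ⟨ξ, hξ, hslope⟩ := exists_hasDerivAt_eq_slope (energyFlux V W a b θ G N u u' v v') _
    one_pos ((hS.continuousOn_energyFlux hP).mono (Icc_subset_Icc hR0 hR))
    fun x hx ↦ hS.hasDerivAt_energyFlux hP hθ.ne' (hIoo hx)
  rw [sub_zero, div_one] at hslope
  refine ⟨ξ, hξ, ?_⟩
  have hVξ := hP.V_pos ξ
  have hW1 := hP.W_pos 1
  have hWξ := hP.W_pos ξ
  have ha0 := hP.a_pos 0
  have haξ := hP.a_pos ξ
  have hb1 := hP.b_pos 1
  calc 2 * (V 0 * W 1) * (a 0 * b 1) * (u ξ / a ξ - v ξ / b ξ) ^ 2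
      ≤ 2 * (V ξ * W ξ) * (a ξ * b ξ) * (u ξ / a ξ - v ξ / b ξ) ^ 2 := by
        gcongr
        exacts [hP.monotone_V hξ.1.le, hP.antitone_W hξ.2.le, hP.monotone_a hξ.1.le,
          hP.antitone_b hξ.2.le]
    _ ≤ dissipation V W a b u u' v v' ξ := le_add_of_nonneg_left (by positivity)
    _ ≤ energyFlux V W a b θ G N u u' v v' 1 - energyFlux V W a b θ G N u u' v v' 0 :=
        hslope ▸ hS.dissipation_le_deriv_energyFlux (hIoo hξ)
    _ ≤ dissipationBudget θ G N := hS.energyFlux_sub_le hP hθ hR0 zero_le_one hR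

end Profile

end LinearizedSolution

/-- The constant controlling the difference of the ratios `u 0 / a 0` and `v 0 / b 0` by the square
root of the dissipation budget. -/
noncomputable def ratioGapConst (V W a b : ℝ → ℝ) : ℝ :=
  1 / a 0 + 1 / b 1 + 1 / √(2 * (V 0 * W 1) * (a 0 * b 1))

/-- The constant controlling the distance of a solution to the multiples of the kernel element
`(a, b)` by the square root of the dissipation budget. -/
noncomputable def kernelDistConst (V W a b : ℝ → ℝ) (K : ℝ) : ℝ :=
  K / a 0 + K / b 0 + K * ratioGapConst V W a b

theorem SegregatedProfile.ratioGapConst_nonneg {V W a b : ℝ → ℝ}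
    (hP : SegregatedProfile V W a b) : 0 ≤ ratioGapConst V W a b := by
  have := hP.a_pos 0
  have := hP.b_pos 1
  unfold ratioGapConst
  positivity

theorem BoundedProfile.kernelDistConst_nonneg {V W a b : ℝ → ℝ} {K : ℝ}
    (hP : BoundedProfile V W a b K) : 0 ≤ kernelDistConst V W a b K := by
  have := hP.a_pos 0
  have := hP.b_pos 0
  have := hP.K_pos
  have := hP.ratioGapConst_nonneg
  unfold kernelDistConst
  positivity

theorem sqrt_mul_le_one_add_mul_sqrt {t D : ℝ} (ht : 0 ≤ t) : √(t * D) ≤ √D * (1 + t) := by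
  rw [Real.sqrt_mul ht, mul_comm]
  exact mul_le_mul_of_nonneg_left (Real.sqrt_le_iff.2 ⟨by positivity, by nlinarith⟩)
    (Real.sqrt_nonneg D)

theorem abs_mul_le_of_mul_add_le {μ E e B d : ℝ} (hB : 0 ≤ B) (he : |e| ≤ d)
    (h : μ * (μ * E + e) ≤ |μ| * B) : |μ| * E ≤ B + d := by
  rcases eq_or_ne μ 0 with rfl | hμ
  · rw [abs_zero, zero_mul]
    exact add_nonneg hB ((abs_nonneg e).trans he)
  · refine le_of_mul_le_mul_left ?_ (abs_pos.2 hμ)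
    have hμe : |μ * e| ≤ |μ| * d := abs_mul μ e ▸ mul_le_mul_of_nonneg_left he (abs_nonneg μ)
    rw [← mul_assoc, abs_mul_abs_self]
    linarith [neg_abs_le (μ * e)]

namespace LinearizedSolution

section NearKernel

variable {V W a b : ℝ → ℝ} {K ω R θ G N : ℝ} {f h u u' v v' : ℝ → ℝ}
  (hS : LinearizedSolution V W ω R θ G N f h u u' v v')
include hS

theorem abs_ratio_gap_le (hP : SegregatedProfile V W a b) (hθ : 0 < θ) (hR : 1 ≤ R) :
    |u 0 / a 0 - v 0 / b 0| ≤ ratioGapConst V W a b * √(dissipationBudget θ G N) := by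
  obtain ⟨ξ, hξ, hcoupling⟩ := hS.exists_coupling_le hP hθ hR
  set D := dissipationBudget θ G N
  have hD : 0 ≤ D := hS.dissipationBudget_nonneg hθ
  have hR0 : -R ≤ 0 := neg_nonpos.2 hS.R_pos.le
  have hξD : √((ξ - 0) * D) ≤ √D :=
    Real.sqrt_le_sqrt (mul_le_of_le_one_left hD (by linarith [hξ.2]))
  have hσ : |u ξ / a ξ - u 0 / a 0| ≤ 1 / a 0 * √D := by
    rw [one_div_mul_eq_div, le_div_iff₀' (hP.a_pos 0)]
    exact (hS.abs_u_div_a_sub_le hP hθ hR0 hξ.1.le (hξ.2.le.trans hR)).trans hξD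
  have hτ : |v ξ / b ξ - v 0 / b 0| ≤ 1 / b 1 * √D := by
    rw [one_div_mul_eq_div, le_div_iff₀' (hP.b_pos 1)]
    exact (mul_le_mul_of_nonneg_right (hP.antitone_b hξ.2.le) (abs_nonneg _)).trans
      ((hS.abs_v_div_b_sub_le hP hθ hR0 hξ.1.le (hξ.2.le.trans hR)).trans hξD)
  set κ := 2 * (V 0 * W 1) * (a 0 * b 1) with hκ_def
  have hκ : 0 < κ := by
    have := hP.V_pos 0
    have := hP.W_pos 1
    have := hP.a_pos 0
    have := hP.b_pos 1
    positivity
  have hcross : |u ξ / a ξ - v ξ / b ξ| ≤ 1 / √κ * √D := by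
    rw [one_div_mul_eq_div, ← Real.sqrt_div hD]
    exact Real.abs_le_sqrt ((le_div_iff₀' hκ).2 hcoupling)
  have hsplit : u 0 / a 0 - v 0 / b 0 = -(u ξ / a ξ - u 0 / a 0) + (u ξ / a ξ - v ξ / b ξ)
      + (v ξ / b ξ - v 0 / b 0) := by ring
  rw [hsplit, ratioGapConst, ← hκ_def]
  refine (abs_add_three _ _ _).trans ?_
  rw [abs_neg]
  linarith

variable (hP : BoundedProfile V W a b K)
include hP

theorem abs_u_sub_le (hθ : 0 < θ) {x : ℝ} (hx : x ∈ Icc (-R) R) :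
    |u x - u 0 / a 0 * a x| ≤ K / a 0 * (√(dissipationBudget θ G N) * (1 + |x|)) := by
  have hP' := hP.toSegregatedProfile
  have ha0 := hP.a_pos 0
  have hax := hP.a_pos x
  have hsqrt := sqrt_mul_le_one_add_mul_sqrt (D := dissipationBudget θ G N) (abs_nonneg x)
  have hfactor : |u x - u 0 / a 0 * a x| = a x * |u x / a x - u 0 / a 0| := by
    rw [← abs_of_pos hax, ← abs_mul, abs_of_pos hax, mul_sub, mul_div_cancel₀ _ hax.ne', mul_comm]
  rw [hfactor]
  rcases le_total 0 x with h0 | h0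
  · have hinc := hS.abs_u_div_a_sub_le hP' hθ (neg_nonpos.2 hS.R_pos.le) h0 hx.2
    rw [sub_zero] at hinc
    rw [abs_of_nonneg h0] at hsqrt ⊢
    calc a x * |u x / a x - u 0 / a 0|
        ≤ K * |u x / a x - u 0 / a 0| := by gcongr; exact hP.a_le x
      _ = K / a 0 * (a 0 * |u x / a x - u 0 / a 0|) := by field_simp
      _ ≤ K / a 0 * (√(dissipationBudget θ G N) * (1 + x)) :=
          mul_le_mul_of_nonneg_left (hinc.trans hsqrt) (div_pos hP.K_pos ha0).le
  · have hinc := hS.abs_u_div_a_sub_le hP' hθ hx.1 h0 hS.R_pos.le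
    rw [zero_sub, ← abs_of_nonpos h0, abs_sub_comm] at hinc
    refine (hinc.trans hsqrt).trans (le_mul_of_one_le_left (by positivity) ?_)
    exact (one_le_div ha0).2 (hP.a_le 0)

theorem abs_v_sub_le (hθ : 0 < θ) {x : ℝ} (hx : x ∈ Icc (-R) R) :
    |v x - v 0 / b 0 * b x| ≤ K / b 0 * (√(dissipationBudget θ G N) * (1 + |x|)) := by
  simpa using hS.reflect.abs_u_sub_le hP.reflect hθ (neg_mem_Icc_neg hx)

theorem near_kernel (hθ : 0 < θ) (hR : 1 ≤ R) {x : ℝ} (hx : x ∈ Icc (-R) R) :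
    |u x - u 0 / a 0 * a x|
        ≤ kernelDistConst V W a b K * √(dissipationBudget θ G N) * (1 + |x|) ∧
      |v x - u 0 / a 0 * b x|
        ≤ kernelDistConst V W a b K * √(dissipationBudget θ G N) * (1 + |x|) := by
  have hP' := hP.toSegregatedProfile
  have hu := hS.abs_u_sub_le hP hθ hx
  have hv := hS.abs_v_sub_le hP hθ hx
  have hgap := hS.abs_ratio_gap_le hP' hθ hR
  set s := √(dissipationBudget θ G N)
  have hKa : 0 ≤ K / a 0 * (s * (1 + |x|)) := (abs_nonneg _).trans hu
  have hKb : 0 ≤ K / b 0 * (s * (1 + |x|)) := (abs_nonneg _).trans hv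
  have hgap0 := hP'.ratioGapConst_nonneg
  have hK := hP.K_pos
  have hKgap : 0 ≤ K * ratioGapConst V W a b * s := by positivity
  have hb : |(u 0 / a 0 - v 0 / b 0) * b x| ≤ K * ratioGapConst V W a b * s := by
    rw [abs_mul, abs_of_pos (hP.b_pos x)]
    calc |u 0 / a 0 - v 0 / b 0| * b x ≤ (ratioGapConst V W a b * s) * K :=
          mul_le_mul hgap (hP.b_le x) (hP.b_pos x).le (by positivity)
      _ = K * ratioGapConst V W a b * s := by ring
  have hgrow : K * ratioGapConst V W a b * s ≤ K * ratioGapConst V W a b * s * (1 + |x|) :=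
    le_mul_of_one_le_right hKgap (by simp)
  have hsplit : v x - u 0 / a 0 * b x
      = (v x - v 0 / b 0 * b x) - (u 0 / a 0 - v 0 / b 0) * b x := by ring
  unfold kernelDistConst
  constructor
  · linarith
  · rw [hsplit]
    linarith [abs_sub (v x - v 0 / b 0 * b x) ((u 0 / a 0 - v 0 / b 0) * b x)]

end NearKernel

/-- The pairing of `(u, v)` with the kernel element `(a, b)`. -/
def kernelPairing (a b u v : ℝ → ℝ) (x : ℝ) : ℝ := u x * a x + v x * b x

/-- The Wronskian `a u' - a' u + b v' - b' v` of `(u, v)` and the kernel element `(a, b)`. -/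
def kernelWronskian (V W a b u u' v v' : ℝ → ℝ) (x : ℝ) : ℝ :=
  (a x * u' x - V x * W x ^ 2 * u x) + (b x * v' x + W x * V x ^ 2 * v x)

/-- The derivative of `kernelPairing a b u v - μ (V W)²` minus `kernelWronskian + m`; it is
integrable because `(u, v)` is close to `μ (a, b)`. Here `m` is a primitive of the source paired
with `(a, b)`. -/
def pairingResidual (V W a b : ℝ → ℝ) (μ : ℝ) (u v m : ℝ → ℝ) (x : ℝ) : ℝ :=
  2 * ((u x - μ * a x) * (V x * W x ^ 2) - (v x - μ * b x) * (W x * V x ^ 2)) - m x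

section Pairing

variable {V W a b : ℝ → ℝ} {K ω R θ G N μ ρ : ℝ} {f h u u' v v' m : ℝ → ℝ}
  (hS : LinearizedSolution V W ω R θ G N f h u u' v v')
include hS

theorem hasDerivAt_kernelWronskian (hP : SegregatedProfile V W a b) {x : ℝ}
    (hx : x ∈ Ioo (-R) R) :
    HasDerivAt (kernelWronskian V W a b u u' v v')
      (ω ^ 2 * kernelPairing a b u v x - (a x * f x + b x * h x)) x := by
  have hu := ((hP.hasDerivAt_a x).fun_mul (hS.hasDerivAt_u' x hx)).fun_sub
    (((hP.hasDerivAt_V x).fun_mul ((hP.hasDerivAt_W x).fun_pow 2)).fun_mul (hS.hasDerivAt_u x hx))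
  have hv := ((hP.hasDerivAt_b x).fun_mul (hS.hasDerivAt_v' x hx)).fun_add
    (((hP.hasDerivAt_W x).fun_mul ((hP.hasDerivAt_V x).fun_pow 2)).fun_mul (hS.hasDerivAt_v x hx))
  refine (hu.fun_add hv).congr_deriv ?_
  unfold kernelPairing
  ring

theorem hasDerivAt_kernelPairing_sub (hP : SegregatedProfile V W a b) {x : ℝ}
    (hx : x ∈ Ioo (-R) R) :
    HasDerivAt (fun x ↦ kernelPairing a b u v x - μ * (V x * W x) ^ 2)
      (kernelWronskian V W a b u u' v v' x + m x + pairingResidual V W a b μ u v m x) x := by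
  have huv := ((hS.hasDerivAt_u x hx).fun_mul (hP.hasDerivAt_a x)).fun_add
    ((hS.hasDerivAt_v x hx).fun_mul (hP.hasDerivAt_b x))
  have hVW := (((hP.hasDerivAt_V x).fun_mul (hP.hasDerivAt_W x)).fun_pow 2).const_mul μ
  refine (huv.fun_sub hVW).congr_deriv ?_
  unfold kernelWronskian pairingResidual
  ring

theorem continuousOn_kernelPairing_sub (hP : SegregatedProfile V W a b) :
    ContinuousOn (fun x ↦ kernelPairing a b u v x - μ * (V x * W x) ^ 2) (Icc (-R) R) := by
  have := hS.continuousOn_u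
  have := hS.continuousOn_v
  have := hP.continuous_a.continuousOn (s := Icc (-R) R)
  have := hP.continuous_b.continuousOn (s := Icc (-R) R)
  have := hP.continuous_V.continuousOn (s := Icc (-R) R)
  have := hP.continuous_W.continuousOn (s := Icc (-R) R)
  unfold kernelPairing
  fun_prop

theorem continuousOn_pairingResidual (hP : SegregatedProfile V W a b)
    (hm : ContinuousOn m (Icc (-R) R)) :
    ContinuousOn (pairingResidual V W a b μ u v m) (Icc (-R) R) := by
  have := hS.continuousOn_u
  have := hS.continuousOn_v
  have := hP.continuous_a.continuousOn (s := Icc (-R) R)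
  have := hP.continuous_b.continuousOn (s := Icc (-R) R)
  have := hP.continuous_V.continuousOn (s := Icc (-R) R)
  have := hP.continuous_W.continuousOn (s := Icc (-R) R)
  unfold pairingResidual
  fun_prop

omit hS in
theorem abs_pairingResidual_le (hP : BoundedProfile V W a b K) {x : ℝ}
    (hu : |u x - μ * a x| ≤ ρ * (1 + |x|)) (hv : |v x - μ * b x| ≤ ρ * (1 + |x|)) :
    |pairingResidual V W a b μ u v m x| ≤ 4 * K * ρ * Real.exp (-|x|) + |m x| := by
  have hV := hP.V_pos x
  have hW := hP.W_pos x
  have hρ : 0 ≤ ρ := nonneg_of_mul_nonneg_left ((abs_nonneg _).trans hu) (by positivity)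
  have hterm : ∀ {y c : ℝ}, |y| ≤ ρ * (1 + |x|) → 0 < c → c * (1 + |x|) ≤ K * Real.exp (-|x|) →
      |y * c| ≤ ρ * (K * Real.exp (-|x|)) := by
    intro y c hy hc hcK
    rw [abs_mul, abs_of_pos hc]
    calc |y| * c ≤ ρ * (1 + |x|) * c := by gcongr
      _ = ρ * (c * (1 + |x|)) := by ring
      _ ≤ ρ * (K * Real.exp (-|x|)) := by gcongr
  have hu' := hterm hu (by positivity) (hP.V_mul_W_sq_le x)
  have hv' := hterm hv (by positivity) (hP.W_mul_V_sq_le x)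
  unfold pairingResidual
  refine (abs_sub _ _).trans (add_le_add_left ?_ _)
  rw [abs_mul, abs_two]
  linarith [abs_sub ((u x - μ * a x) * (V x * W x ^ 2)) ((v x - μ * b x) * (W x * V x ^ 2))]

theorem abs_source_pairing_le (hP : BoundedProfile V W a b K) {x : ℝ} (hx : x ∈ Ioo (-R) R) :
    |a x * f x + b x * h x| ≤ 4 * K * G * Real.exp (-(θ * |x|)) := by
  have hK := hP.K_pos
  calc |a x * f x + b x * h x| ≤ a x * |f x| + b x * |h x| := by
        refine (abs_add_le _ _).trans_eq ?_
        rw [abs_mul, abs_mul, abs_of_pos (hP.a_pos x), abs_of_pos (hP.b_pos x)]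
    _ ≤ K * (2 * G * Real.exp (-(θ * |x|))) + K * (2 * G * Real.exp (-(θ * |x|))) := by
        gcongr
        exacts [hP.a_le x, hS.abs_f_le hx, hP.b_le x, hS.abs_h_le hx]
    _ = 4 * K * G * Real.exp (-(θ * |x|)) := by ring

/- `S = kernelPairing a b u v - μ (V W)² - ∫ r` satisfies `S' = kernelWronskian + m` and
`S'' = ω² kernelPairing a b u v`, so `μ S - |μ| B` is convex where it is positive. -/
theorem mul_pairing_sub_le (hP : SegregatedProfile V W a b) {B : ℝ}
    (hm : ContinuousOn m (Icc (-R) R))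
    (hm' : ∀ x ∈ Ioo (-R) R, HasDerivAt m (a x * f x + b x * h x) x)
    (hB : ∀ x ∈ Icc (-R) R, |∫ t in (0)..x, pairingResidual V W a b μ u v m t| ≤ B) :
    μ * (kernelPairing a b u v 0 - μ * (V 0 * W 0) ^ 2) ≤ |μ| * B := by
  have hr := hS.continuousOn_pairingResidual (μ := μ) hP hm
  have h0 := Ioo_subset_Icc_self hS.zero_mem_Ioo
  set r := pairingResidual V W a b μ u v m
  have hμ_int : ∀ x ∈ Icc (-R) R, |μ * ∫ t in (0)..x, r t| ≤ |μ| * B := fun x hx ↦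
    abs_mul μ _ ▸ mul_le_mul_of_nonneg_left (hB x hx) (abs_nonneg μ)
  have hμsq : ∀ x, 0 ≤ μ * (μ * (V x * W x) ^ 2) := fun x ↦ by
    rw [← mul_assoc]; exact mul_nonneg (mul_self_nonneg μ) (sq_nonneg _)
  have hboundary : ∀ x ∈ Icc (-R) R, kernelPairing a b u v x = 0 →
      μ * (kernelPairing a b u v x - μ * (V x * W x) ^ 2 - ∫ t in (0)..x, r t) - |μ| * B ≤ 0 := by
    intro x hx hzero
    rw [hzero]
    linarith [hμsq x, neg_abs_le (μ * ∫ t in (0)..x, r t), hμ_int x hx]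
  have hmax := nonpos_of_deriv2_nonneg_of_pos
    (z := fun x ↦ μ * (kernelPairing a b u v x - μ * (V x * W x) ^ 2 - ∫ t in (0)..x, r t)
      - |μ| * B)
    (z' := fun x ↦ μ * (kernelWronskian V W a b u u' v v' x + m x))
    (z'' := fun x ↦ μ * (ω ^ 2 * kernelPairing a b u v x))
    ((continuousOn_const.mul ((hS.continuousOn_kernelPairing_sub hP).sub
      (continuousOn_primitive_Icc hr h0))).sub continuousOn_const)
    (fun x hx ↦ ((((hS.hasDerivAt_kernelPairing_sub (m := m) hP hx).fun_sub
      (hasDerivAt_primitive hr hx h0)).const_mul μ).sub_const _).congr_deriv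
        (by rw [add_sub_cancel_right]))
    (fun x hx ↦ (((hS.hasDerivAt_kernelWronskian hP hx).fun_add
      (hm' x hx)).const_mul μ).congr_deriv (by ring))
    (fun x hx hpos ↦ ?_)
    (hboundary _ hS.left_mem (by simp [kernelPairing, hS.u_left, hS.v_left]))
    (hboundary _ (by simpa using neg_mem_Icc_neg hS.left_mem)
      (by simp [kernelPairing, hS.u_right, hS.v_right])) 0 h0
  · simp only [intervalIntegral.integral_same, sub_zero] at hmax
    linarith
  · have hpairing : 0 ≤ μ * kernelPairing a b u v x := by
      linarith [hμsq x, neg_abs_le (μ * ∫ t in (0)..x, r t), hμ_int x (Ioo_subset_Icc_self hx)]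
    linarith [mul_nonneg (sq_nonneg ω) hpairing]

theorem abs_mul_hamiltonian_le (hP : BoundedProfile V W a b K) (hθ : 0 < θ)
    (hf : ContinuousOn f (Icc (-R) R)) (hh : ContinuousOn h (Icc (-R) R))
    (horth : ∫ x in (-R)..R, (a x * f x + b x * h x) = 0)
    (hu : ∀ x ∈ Icc (-R) R, |u x - μ * a x| ≤ ρ * (1 + |x|))
    (hv : ∀ x ∈ Icc (-R) R, |v x - μ * b x| ≤ ρ * (1 + |x|)) :
    |μ| * (a 0 ^ 2 + b 0 ^ 2 - (V 0 * W 0) ^ 2) ≤ 6 * K * ρ + 4 * K * G / θ ^ 2 := by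
  have hP' := hP.toSegregatedProfile
  have hK := hP.K_pos
  have hG := hS.G_nonneg
  have h0 := Ioo_subset_Icc_self hS.zero_mem_Ioo
  have hu0 := hu 0 h0
  have hv0 := hv 0 h0
  rw [abs_zero, add_zero, mul_one] at hu0 hv0
  have hρ : 0 ≤ ρ := (abs_nonneg _).trans hu0
  have hsource : ContinuousOn (fun x ↦ a x * f x + b x * h x) (Icc (-R) R) :=
    (hP'.continuous_a.continuousOn.mul hf).add (hP'.continuous_b.continuousOn.mul hh)
  set m : ℝ → ℝ := fun x ↦ ∫ t in (-R)..x, (a t * f t + b t * h t)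
  have hm := continuousOn_primitive_Icc hsource hS.left_mem
  have hm' := fun x (hx : x ∈ Ioo (-R) R) ↦ hasDerivAt_primitive hsource hx hS.left_mem
  have hm_le := abs_le_exp_abs_of_abs_deriv_le hθ (by positivity) hm hm'
    intervalIntegral.integral_same horth fun x hx ↦ hS.abs_source_pairing_le hP hx
  have hprim := abs_primitive_le hθ (c := 4 * K * ρ) (by positivity) (by positivity)
    (hS.continuousOn_pairingResidual (μ := μ) hP' hm) fun x hx ↦
      (abs_pairingResidual_le hP (hu x (Ioo_subset_Icc_self hx))
        (hv x (Ioo_subset_Icc_self hx))).trans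
        (add_le_add_right (hm_le x (Ioo_subset_Icc_self hx)) _)
  have hoff : |(u 0 - μ * a 0) * a 0 + (v 0 - μ * b 0) * b 0| ≤ ρ * K + ρ * K := by
    refine (abs_add_le _ _).trans (add_le_add ?_ ?_)
    · rw [abs_mul, abs_of_pos (hP.a_pos 0)]
      exact mul_le_mul hu0 (hP.a_le 0) (hP.a_pos 0).le hρ
    · rw [abs_mul, abs_of_pos (hP.b_pos 0)]
      exact mul_le_mul hv0 (hP.b_le 0) (hP.b_pos 0).le hρ
  refine (abs_mul_le_of_mul_add_le (by positivity) hoff (le_of_eq_of_le ?_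
    (hS.mul_pairing_sub_le hP' hm hm' hprim))).trans_eq ?_
  · unfold kernelPairing
    ring
  · field_simp
    ring

end Pairing

end LinearizedSolution

theorem abs_le_of_exp_forcing {y y' c k : ℝ → ℝ} {p q A B θ δ : ℝ} (hθ : 0 < θ) (hA : 0 ≤ A)
    (hB : 0 ≤ B) (hp : 0 ≤ p) (hy : ContinuousOn y (Icc p q))
    (hy' : ∀ x ∈ Ioo p q, HasDerivAt y (y' x) x)
    (hy'' : ∀ x ∈ Ioo p q, HasDerivAt y' (c x * y x - k x) x) (hc : ∀ x ∈ Ioo p q, 0 ≤ c x)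
    (hk : ∀ x ∈ Ioo p q, |k x| ≤ A * Real.exp (-(θ * x)) + B * Real.exp (-x))
    (hyp : |y p| ≤ δ) (hyq : y q = 0) :
    ∀ x ∈ Icc p q, |y x| ≤ δ + A / θ ^ 2 + B * Real.exp (-p) := by
  set L := δ + A / θ ^ 2 + B * Real.exp (-p)
  have hδ : 0 ≤ δ := (abs_nonneg _).trans hyp
  have hle : ∀ x, p ≤ x →
      δ ≤ L + -(A / θ ^ 2) * Real.exp (-(θ * x)) + -B * Real.exp (-(1 * x)) := by
    intro x hx
    have hθx : Real.exp (-(θ * x)) ≤ 1 :=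
      Real.exp_le_one_iff.2 (neg_nonpos.2 (mul_nonneg hθ.le (hp.trans hx)))
    have hpx : Real.exp (-(1 * x)) ≤ Real.exp (-p) := by rw [one_mul]; gcongr
    linarith [mul_le_mul_of_nonneg_left hθx (show 0 ≤ A / θ ^ 2 by positivity),
      mul_le_mul_of_nonneg_left hpx hB]
  intro x hx
  refine (abs_le_of_supersolution
    (B := fun x ↦ L + -(A / θ ^ 2) * Real.exp (-(θ * x)) + -B * Real.exp (-(1 * x)))
    (B' := fun x ↦ A / θ * Real.exp (-(θ * x)) + B * Real.exp (-(1 * x)))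
    (B'' := fun x ↦ -(A * Real.exp (-(θ * x)) + B * Real.exp (-x))) hy (by fun_prop) hy' hy''
    (fun x _ ↦ (((hasDerivAt_exp_neg_mul θ x).const_mul (-(A / θ ^ 2))).const_add L |>.fun_add
      ((hasDerivAt_exp_neg_mul 1 x).const_mul (-B))).congr_deriv (by field_simp))
    (fun x _ ↦ (((hasDerivAt_exp_neg_mul θ x).const_mul (A / θ)).fun_add
      ((hasDerivAt_exp_neg_mul 1 x).const_mul B)).congr_deriv (by field_simp; ring_nf))
    hc (fun x hx ↦ hδ.trans (hle x hx.1.le)) (fun x hx ↦ neg_le_neg (hk x hx))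
    (hyp.trans (hle p le_rfl)) ?_ x hx).trans ?_
  · rw [hyq, abs_zero]
    exact hδ.trans (hle q (hx.1.trans hx.2))
  · have : 0 ≤ A / θ ^ 2 * Real.exp (-(θ * x)) := by positivity
    have : 0 ≤ B * Real.exp (-(1 * x)) := by positivity
    linarith

namespace LinearizedSolution

section Outer

variable {V W a b : ℝ → ℝ} {K ω R θ G N M L : ℝ} {f h u u' v v' : ℝ → ℝ}
  (hS : LinearizedSolution V W ω R θ G N f h u u' v v') (hP : BoundedProfile V W a b K)
  (hθ : 0 < θ)
include hP

theorem abs_coupling_add_le {s y x : ℝ} (hx : 0 ≤ x) (hy : |y| ≤ N)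
    (hs : |s| ≤ 2 * G * Real.exp (-(θ * |x|))) :
    |2 * (V x * W x) * y + s| ≤ 2 * G * Real.exp (-(θ * x)) + 2 * K * N * Real.exp (-x) := by
  have hK := hP.K_pos
  have hVW := hP.V_mul_W_le x
  have hVW0 : 0 ≤ V x * W x := mul_nonneg (hP.V_pos x).le (hP.W_pos x).le
  rw [abs_of_nonneg hx] at hs hVW
  have hcoupling : |2 * (V x * W x) * y| ≤ 2 * (K * Real.exp (-x)) * N := by
    rw [abs_mul, abs_of_nonneg (by positivity : 0 ≤ 2 * (V x * W x))]
    gcongr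
  linarith [abs_add_le (2 * (V x * W x) * y) s]

include hS hθ

theorem abs_u_le_of_right (hM : 0 ≤ M) (huM : |u M| ≤ L) :
    ∀ x ∈ Icc M R, |u x| ≤ L + 2 * G / θ ^ 2 + 2 * K * N * Real.exp (-M) := by
  have hK := hP.K_pos
  have hN := hS.N_nonneg
  have hG := hS.G_nonneg
  have hRM : -R ≤ M := (neg_nonpos.2 hS.R_pos.le).trans hM
  have hsub : Ioo M R ⊆ Ioo (-R) R := Ioo_subset_Ioo_left hRM
  exact abs_le_of_exp_forcing hθ (by positivity) (by positivity) hM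
    (hS.continuousOn_u.mono (Icc_subset_Icc_left hRM)) (fun x hx ↦ hS.hasDerivAt_u x (hsub hx))
    (fun x hx ↦ hS.hasDerivAt_u' x (hsub hx)) (fun x _ ↦ by positivity)
    (fun x hx ↦ abs_coupling_add_le hP (hM.trans hx.1.le)
      (hS.abs_v_le x (Ioo_subset_Icc_self (hsub hx))) (hS.abs_f_le (hsub hx))) huM hS.u_right

theorem abs_v_le_of_right (hM : 0 ≤ M) (hvM : |v M| ≤ L) :
    ∀ x ∈ Icc M R, |v x| ≤ L + 2 * G / θ ^ 2 + 2 * K * N * Real.exp (-M) := by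
  have hK := hP.K_pos
  have hN := hS.N_nonneg
  have hG := hS.G_nonneg
  have hRM : -R ≤ M := (neg_nonpos.2 hS.R_pos.le).trans hM
  have hsub : Ioo M R ⊆ Ioo (-R) R := Ioo_subset_Ioo_left hRM
  exact abs_le_of_exp_forcing hθ (by positivity) (by positivity) hM
    (hS.continuousOn_v.mono (Icc_subset_Icc_left hRM)) (fun x hx ↦ hS.hasDerivAt_v x (hsub hx))
    (fun x hx ↦ hS.hasDerivAt_v' x (hsub hx)) (fun x _ ↦ by positivity)
    (fun x hx ↦ abs_coupling_add_le hP (hM.trans hx.1.le)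
      (hS.abs_u_le x (Ioo_subset_Icc_self (hsub hx))) (hS.abs_h_le (hsub hx))) hvM hS.v_right

theorem max_abs_le_of_max_abs_le_core (hM : 0 ≤ M)
    (hcore : ∀ x ∈ Icc (-M) M, max |u x| |v x| ≤ L) :
    ∀ x ∈ Icc (-R) R, max |u x| |v x| ≤ L + 2 * G / θ ^ 2 + 2 * K * N * Real.exp (-M) := by
  have hK := hP.K_pos
  have hN := hS.N_nonneg
  have hG := hS.G_nonneg
  have hright := max_le_iff.1 (hcore M (right_mem_Icc.2 (neg_le_self hM)))
  have hleft := max_le_iff.1 (hcore (-M) (left_mem_Icc.2 (neg_le_self hM)))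
  intro x hx
  rcases le_total M x with hMx | hxM
  · exact max_le (hS.abs_u_le_of_right hP hθ hM hright.1 x ⟨hMx, hx.2⟩)
      (hS.abs_v_le_of_right hP hθ hM hright.2 x ⟨hMx, hx.2⟩)
  rcases le_total x (-M) with hxM' | hMx
  · have hmem : -x ∈ Icc M R := ⟨le_neg.1 hxM', neg_le.1 hx.1⟩
    have hu := hS.reflect.abs_v_le_of_right hP.reflect hθ hM hleft.1 (-x) hmem
    have hv := hS.reflect.abs_u_le_of_right hP.reflect hθ hM hleft.2 (-x) hmem
    rw [neg_neg] at hu hv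
    exact max_le hu hv
  · have htail : 0 ≤ 2 * G / θ ^ 2 + 2 * K * N * Real.exp (-M) := by positivity
    linarith [hcore x ⟨hMx, hxM⟩]

end Outer

section Bounds

variable {V W a b : ℝ → ℝ} {K ω R θ G N M : ℝ} {f h u u' v v' : ℝ → ℝ}
  (hS : LinearizedSolution V W ω R θ G N f h u u' v v') (hP : BoundedProfile V W a b K)
  (hθ : 0 < θ)
include hS hP hθ

theorem abs_u_le_of_radius_le (hRM : R ≤ M) {x : ℝ} (hx : x ∈ Icc (-R) R) :
    |u x| ≤ K / a (-M) * √(2 * M * dissipationBudget θ G N) := by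
  have haM := hP.a_pos (-M)
  have hax := hP.a_pos x
  have hinc := hS.abs_u_div_a_sub_le hP.toSegregatedProfile hθ le_rfl hx.1 hx.2
  rw [hS.u_left, zero_div, sub_zero] at hinc
  have haR : a (-M) ≤ a (-R) := hP.monotone_a (neg_le_neg hRM)
  have hlen : x - -R ≤ 2 * M := by linarith [hx.2]
  calc |u x| = a x * |u x / a x| := by rw [abs_div, abs_of_pos hax]; field_simp
    _ ≤ K * |u x / a x| := by gcongr; exact hP.a_le x
    _ = K / a (-M) * (a (-M) * |u x / a x|) := by field_simp
    _ ≤ K / a (-M) * √(2 * M * dissipationBudget θ G N) := by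
        refine mul_le_mul_of_nonneg_left ?_ (div_pos hP.K_pos haM).le
        exact (mul_le_mul_of_nonneg_right haR (abs_nonneg _)).trans (hinc.trans
          (Real.sqrt_le_sqrt (mul_le_mul_of_nonneg_right hlen (hS.dissipationBudget_nonneg hθ))))

theorem abs_v_le_of_radius_le (hRM : R ≤ M) {x : ℝ} (hx : x ∈ Icc (-R) R) :
    |v x| ≤ K / b M * √(2 * M * dissipationBudget θ G N) := by
  simpa using hS.reflect.abs_u_le_of_radius_le hP.reflect hθ hRM (neg_mem_Icc_neg hx)

theorem max_abs_le_core (hR : 1 ≤ R) (hMR : M ≤ R)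
    (hf : ContinuousOn f (Icc (-R) R)) (hh : ContinuousOn h (Icc (-R) R))
    (horth : ∫ x in (-R)..R, (a x * f x + b x * h x) = 0) :
    ∀ x ∈ Icc (-M) M,
      max |u x| |v x| ≤ kernelDistConst V W a b K * √(dissipationBudget θ G N) * (1 + M)
        + (6 * K * (kernelDistConst V W a b K * √(dissipationBudget θ G N)) + 4 * K * G / θ ^ 2)
          / (a 0 ^ 2 + b 0 ^ 2 - (V 0 * W 0) ^ 2) * K := by
  have hnear := fun x (hx : x ∈ Icc (-R) R) ↦ hS.near_kernel hP hθ hR hx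
  have hμ := hS.abs_mul_hamiltonian_le hP hθ hf hh horth (fun x hx ↦ (hnear x hx).1)
    fun x hx ↦ (hnear x hx).2
  rw [← le_div_iff₀ (hP.hamiltonian_pos 0)] at hμ
  have hρ : 0 ≤ kernelDistConst V W a b K * √(dissipationBudget θ G N) :=
    mul_nonneg hP.kernelDistConst_nonneg (Real.sqrt_nonneg _)
  set μ := u 0 / a 0
  set ρ := kernelDistConst V W a b K * √(dissipationBudget θ G N)
  intro x hx
  have hxR : x ∈ Icc (-R) R := Icc_subset_Icc (neg_le_neg hMR) hMR hx
  have hρx : ρ * (1 + |x|) ≤ ρ * (1 + M) := by gcongr; exact abs_le.2 hx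
  have hsplit : ∀ {y e : ℝ}, |y - μ * e| ≤ ρ * (1 + |x|) → 0 < e → e ≤ K → |y| ≤ ρ * (1 + M)
      + (6 * K * ρ + 4 * K * G / θ ^ 2) / (a 0 ^ 2 + b 0 ^ 2 - (V 0 * W 0) ^ 2) * K := by
    intro y e hy he heK
    calc |y| = |(y - μ * e) + μ * e| := by rw [sub_add_cancel]
      _ ≤ |y - μ * e| + |μ * e| := abs_add_le _ _
      _ ≤ _ := by
        refine add_le_add (hy.trans hρx) ?_
        rw [abs_mul, abs_of_pos he]
        exact mul_le_mul hμ heK he.le ((abs_nonneg μ).trans hμ)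
  exact max_le (hsplit (hnear x hxR).1 (hP.a_pos x) (hP.a_le x))
    (hsplit (hnear x hxR).2 (hP.b_pos x) (hP.b_le x))

end Bounds

end LinearizedSolution

theorem le_of_le_mul_sqrt {α β κ G N : ℝ} (hκ : 0 ≤ κ) (hG : 0 ≤ G) (hN : 0 ≤ N)
    (h : N ≤ α * √(κ * N * G) + β * G + N / 4) : N ≤ 2 * (α ^ 2 * κ + β) * G := by
  have hamgm : α * √(κ * N * G) ≤ α ^ 2 * κ * G + N / 4 := by
    refine le_of_abs_le (abs_le_of_sq_le_sq ?_ (by positivity))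
    rw [mul_pow, Real.sq_sqrt (by positivity)]
    linarith [sq_nonneg (α ^ 2 * κ * G - N / 4)]
  linarith

namespace BoundedProfile

variable {V W a b : ℝ → ℝ} {K θ : ℝ} (hP : BoundedProfile V W a b K) (hθ : 0 < θ)
include hP hθ

theorem exists_bound_of_le_radius : ∃ α β, 0 ≤ α ∧ 0 ≤ β ∧
    ∀ {ω R G N : ℝ} {f h u u' v v' : ℝ → ℝ}, 8 * K + 1 ≤ R →
      LinearizedSolution V W ω R θ G N f h u u' v v' →
      ContinuousOn f (Icc (-R) R) → ContinuousOn h (Icc (-R) R) →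
      ∫ x in (-R)..R, (a x * f x + b x * h x) = 0 →
      ∀ x ∈ Icc (-R) R,
        max |u x| |v x| ≤ α * √(dissipationBudget θ G N) + β * G + N / 4 := by
  have hK := hP.K_pos
  have hE := hP.hamiltonian_pos 0
  have hκ := hP.kernelDistConst_nonneg
  set E := a 0 ^ 2 + b 0 ^ 2 - (V 0 * W 0) ^ 2 with hE_def
  set κ := kernelDistConst V W a b K with hκ_def
  refine ⟨κ * (1 + (8 * K + 1)) + 6 * K ^ 2 * κ / E, 4 * K ^ 2 / (θ ^ 2 * E) + 2 / θ ^ 2,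
    by positivity, by positivity, ?_⟩
  intro ω R G N f h u u' v v' hR hS hf hh horth x hx
  have hbound := hS.max_abs_le_of_max_abs_le_core hP hθ (by positivity)
    (hS.max_abs_le_core hP hθ (by linarith) hR hf hh horth) x hx
  rw [← hE_def, ← hκ_def] at hbound
  have htail : 2 * K * N * Real.exp (-(8 * K + 1)) ≤ N / 4 := by
    rw [Real.exp_neg, ← div_eq_mul_inv, div_le_iff₀ (Real.exp_pos _)]
    linarith [mul_le_mul_of_nonneg_left (Real.add_one_le_exp (8 * K + 1)) hS.N_nonneg,
      hS.N_nonneg]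
  refine hbound.trans ((add_le_add_right htail _).trans_eq ?_)
  field_simp
  ring

theorem exists_bound : ∃ α β, 0 ≤ β ∧
    ∀ {ω R G N : ℝ} {f h u u' v v' : ℝ → ℝ},
      LinearizedSolution V W ω R θ G N f h u u' v v' →
      ContinuousOn f (Icc (-R) R) → ContinuousOn h (Icc (-R) R) →
      ∫ x in (-R)..R, (a x * f x + b x * h x) = 0 →
      ∀ x ∈ Icc (-R) R,
        max |u x| |v x| ≤ α * √(dissipationBudget θ G N) + β * G + N / 4 := by
  obtain ⟨α, β, hα, hβ, hlarge⟩ := hP.exists_bound_of_le_radius hθ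
  have hK := hP.K_pos
  set M := 8 * K + 1
  have haM := hP.a_pos (-M)
  have hbM := hP.b_pos M
  refine ⟨α + (K / a (-M) + K / b M) * √(2 * M), β, hβ, ?_⟩
  intro ω R G N f h u u' v v' hS hf hh horth x hx
  set s := √(dissipationBudget θ G N)
  rcases le_total M R with hMR | hRM
  · refine (hlarge hMR hS hf hh horth x hx).trans ?_
    gcongr
    exact le_add_of_nonneg_right (by positivity)
  · have hu := hS.abs_u_le_of_radius_le hP hθ hRM hx
    have hv := hS.abs_v_le_of_radius_le hP hθ hRM hx
    rw [Real.sqrt_mul (by positivity)] at hu hv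
    have hN := hS.N_nonneg
    have hG := hS.G_nonneg
    have hua : 0 ≤ K / a (-M) * (√(2 * M) * s) := by positivity
    have hvb : 0 ≤ K / b M * (√(2 * M) * s) := by positivity
    have hrest : 0 ≤ α * s + β * G + N / 4 := by positivity
    exact max_le (by linarith) (by linarith)

theorem exists_norm_le : ∃ C > 0,
    ∀ {ω R G N : ℝ} {f h u u' v v' : ℝ → ℝ},
      LinearizedSolution V W ω R θ G N f h u u' v v' →
      ContinuousOn f (Icc (-R) R) → ContinuousOn h (Icc (-R) R) →
      ∫ x in (-R)..R, (a x * f x + b x * h x) = 0 →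
      (∃ x ∈ Icc (-R) R, N ≤ max |u x| |v x|) → N ≤ C * G := by
  obtain ⟨α, β, hβ, hbound⟩ := hP.exists_bound hθ
  have hκ : 0 ≤ 2 * Real.pi / θ := by positivity
  refine ⟨2 * (α ^ 2 * (2 * Real.pi / θ) + β) + 1, by positivity, ?_⟩
  rintro ω R G N f h u u' v v' hS hf hh horth ⟨x, hx, hNx⟩
  have hN := hNx.trans (hbound hS hf hh horth x hx)
  rw [show dissipationBudget θ G N = 2 * Real.pi / θ * N * G by unfold dissipationBudget; ring]
    at hN
  linarith [le_of_le_mul_sqrt hκ hS.G_nonneg hS.N_nonneg hN, hS.G_nonneg]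

end BoundedProfile

theorem hasDerivAt_deriv_of_contDiff_two {F : ℝ → ℝ} (hF : ContDiff ℝ 2 F) (x : ℝ) :
    HasDerivAt F (deriv F x) x ∧ HasDerivAt (deriv F) (deriv (deriv F) x) x :=
  ⟨(hF.differentiable two_ne_zero x).hasDerivAt,
    (hF.differentiable_deriv_two x).hasDerivAt⟩

theorem SegregatedProfile.of_contDiff {V1 V2 : ℝ → ℝ} (hV1 : ContDiff ℝ 2 V1)
    (hV2 : ContDiff ℝ 2 V2) (hV1pos : ∀ x, 0 < V1 x) (hV2pos : ∀ x, 0 < V2 x)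
    (hode1 : ∀ x, -deriv (deriv V1) x + V1 x * V2 x ^ 2 = 0)
    (hode2 : ∀ x, -deriv (deriv V2) x + V2 x * V1 x ^ 2 = 0)
    (hmono1 : ∀ x, 0 < deriv V1 x) (hmono2 : ∀ x, deriv V2 x < 0) :
    SegregatedProfile V1 V2 (deriv V1) (fun x ↦ -deriv V2 x) where
  hasDerivAt_V x := (hasDerivAt_deriv_of_contDiff_two hV1 x).1
  hasDerivAt_W x := by simpa using (hasDerivAt_deriv_of_contDiff_two hV2 x).1
  hasDerivAt_a x := (hasDerivAt_deriv_of_contDiff_two hV1 x).2.congr_deriv (by linarith [hode1 x])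
  hasDerivAt_b x :=
    (hasDerivAt_deriv_of_contDiff_two hV2 x).2.fun_neg.congr_deriv (by linarith [hode2 x])
  V_pos := hV1pos
  W_pos := hV2pos
  a_pos := hmono1
  b_pos x := neg_pos.2 (hmono2 x)

theorem exists_hasDerivAt_of_contDiffOn_two {F : ℝ → ℝ} {p q : ℝ} (hpq : p < q)
    (hF : ContDiffOn ℝ 2 F (Icc p q)) :
    ∃ F' : ℝ → ℝ, ContinuousOn F' (Icc p q) ∧ (∀ x ∈ Ioo p q, HasDerivAt F (F' x) x) ∧
      ∀ x ∈ Ioo p q, HasDerivAt F' (deriv (deriv F) x) x := by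
  have hF1 : ContDiffOn ℝ 1 (derivWithin F (Icc p q)) (Icc p q) :=
    hF.derivWithin (uniqueDiffOn_Icc hpq) one_add_one_eq_two.le
  have hF' : ∀ x ∈ Ioo p q, HasDerivAt F (derivWithin F (Icc p q) x) x := fun x hx ↦
    (hF.differentiableOn two_ne_zero x (Ioo_subset_Icc_self hx)).hasDerivWithinAt.hasDerivAt
      (Icc_mem_nhds hx.1 hx.2)
  refine ⟨derivWithin F (Icc p q), hF1.continuousOn, hF', fun x hx ↦ ?_⟩
  have hderiv : deriv F =ᶠ[nhds x] derivWithin F (Icc p q) :=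
    Filter.mem_of_superset (Ioo_mem_nhds hx.1 hx.2) fun y hy ↦ (hF' y hy).deriv
  rw [hderiv.deriv_eq]
  exact ((hF1.differentiableOn one_ne_zero x (Ioo_subset_Icc_self hx)).differentiableAt
    (Icc_mem_nhds hx.1 hx.2)).hasDerivAt

theorem exists_linearizedSolution {V1 V2 : ℝ → ℝ} {ω R θ G N : ℝ} {φ1 φ2 g1 g2 : ℝ → ℝ}
    (hR : 0 < R) (hφ1 : ContDiffOn ℝ 2 φ1 (Icc (-R) R)) (hφ2 : ContDiffOn ℝ 2 φ2 (Icc (-R) R))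
    (hl1 : φ1 (-R) = 0) (hr1 : φ1 R = 0) (hl2 : φ2 (-R) = 0) (hr2 : φ2 R = 0)
    (heq : ∀ x ∈ Ioo (-R) R,
      -deriv (deriv φ1) x + (V2 x ^ 2 + ω ^ 2) * φ1 x + 2 * V1 x * V2 x * φ2 x = g1 x ∧
      -deriv (deriv φ2) x + (V1 x ^ 2 + ω ^ 2) * φ2 x + 2 * V1 x * V2 x * φ1 x = g2 x)
    (hG : ∀ x ∈ Ioo (-R) R, max |g1 x| |g2 x| * Real.cosh (θ * x) ≤ G)
    (hN : ∀ x ∈ Icc (-R) R, max |φ1 x| |φ2 x| ≤ N) :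
    ∃ u' v', LinearizedSolution V1 V2 ω R θ G N g1 (fun x ↦ -g2 x) φ1 u' (fun x ↦ -φ2 x) v' := by
  obtain ⟨u', hu', hφ1u, hu''⟩ := exists_hasDerivAt_of_contDiffOn_two (neg_lt_self hR) hφ1
  obtain ⟨v', hv', hφ2v, hv''⟩ := exists_hasDerivAt_of_contDiffOn_two (neg_lt_self hR) hφ2
  have hcosh := fun x ↦ (Real.cosh_pos (θ * x)).le
  exact ⟨u', fun x ↦ -v' x, {
    R_pos := hR
    continuousOn_u := hφ1.continuousOn
    continuousOn_u' := hu'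
    continuousOn_v := hφ2.continuousOn.neg
    continuousOn_v' := hv'.neg
    hasDerivAt_u := hφ1u
    hasDerivAt_u' := fun x hx ↦ (hu'' x hx).congr_deriv (by linarith [(heq x hx).1])
    hasDerivAt_v := fun x hx ↦ (hφ2v x hx).fun_neg
    hasDerivAt_v' := fun x hx ↦ (hv'' x hx).fun_neg.congr_deriv (by linarith [(heq x hx).2])
    u_left := hl1
    u_right := hr1
    v_left := neg_eq_zero.2 hl2
    v_right := neg_eq_zero.2 hr2
    abs_u_le := fun x hx ↦ (le_max_left _ _).trans (hN x hx)
    abs_v_le := fun x hx ↦ (abs_neg (φ2 x)).trans_le ((le_max_right _ _).trans (hN x hx))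
    abs_f_mul_cosh_le := fun x hx ↦
      (mul_le_mul_of_nonneg_right (le_max_left _ _) (hcosh x)).trans (hG x hx)
    abs_h_mul_cosh_le := fun x hx ↦ abs_neg (g2 x) ▸
      (mul_le_mul_of_nonneg_right (le_max_right _ _) (hcosh x)).trans (hG x hx) }⟩

theorem invertibility_with_orthogonality_general {V1 V2 : ℝ → ℝ} (hV1 : ContDiff ℝ 2 V1)
    (hV2 : ContDiff ℝ 2 V2) (hV1pos : ∀ x, 0 < V1 x) (hV2pos : ∀ x, 0 < V2 x)
    (hode1 : ∀ x, -deriv (deriv V1) x + V1 x * V2 x ^ 2 = 0)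
    (hode2 : ∀ x, -deriv (deriv V2) x + V2 x * V1 x ^ 2 = 0)
    (hmono1 : ∀ x, 0 < deriv V1 x) (hmono2 : ∀ x, deriv V2 x < 0) {θ : ℝ} (hθ : 0 < θ) :
    ∃ C > 0, ∀ R ω : ℝ, 0 < R → ∀ φ1 φ2 g1 g2 : ℝ → ℝ,
      ContDiffOn ℝ 2 φ1 (Icc (-R) R) → ContDiffOn ℝ 2 φ2 (Icc (-R) R) →
      ContinuousOn g1 (Icc (-R) R) → ContinuousOn g2 (Icc (-R) R) →
      φ1 (-R) = 0 → φ1 R = 0 → φ2 (-R) = 0 → φ2 R = 0 →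
      (∀ x ∈ Ioo (-R) R,
        -deriv (deriv φ1) x + (V2 x ^ 2 + ω ^ 2) * φ1 x + 2 * V1 x * V2 x * φ2 x = g1 x ∧
        -deriv (deriv φ2) x + (V1 x ^ 2 + ω ^ 2) * φ2 x + 2 * V1 x * V2 x * φ1 x = g2 x) →
      (∫ x in (-R)..R, (deriv V1 x * g1 x + deriv V2 x * g2 x)) = 0 →
      ∀ G : ℝ, (∀ x ∈ Ioo (-R) R, max |g1 x| |g2 x| * Real.cosh (θ * x) ≤ G) →
      ∀ x ∈ Icc (-R) R, max |φ1 x| |φ2 x| ≤ C * G := by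
  obtain ⟨K, hP⟩ := (SegregatedProfile.of_contDiff hV1 hV2 hV1pos hV2pos hode1 hode2 hmono1
    hmono2).exists_boundedProfile
  obtain ⟨C, hC, hbound⟩ := hP.exists_norm_le hθ
  refine ⟨C, hC, ?_⟩
  intro R ω hR φ1 φ2 g1 g2 hφ1 hφ2 hg1 hg2 hl1 hr1 hl2 hr2 heq horth G hG x hx
  obtain ⟨x₀, hx₀, hmax⟩ := isCompact_Icc.exists_isMaxOn ⟨x, hx⟩
    (hφ1.continuousOn.abs.sup hφ2.continuousOn.abs)
  obtain ⟨u', v', hS⟩ := exists_linearizedSolution hR hφ1 hφ2 hl1 hr1 hl2 hr2 heq hG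
    fun y hy ↦ hmax hy
  refine (hmax hx).trans (hbound hS hg1 hg2.neg ?_ ⟨x₀, hx₀, ?_⟩)
  · simpa only [neg_mul_neg] using horth
  · rw [abs_neg]

/-- **Remark 3.1.** Under the orthogonality condition
`∫_{-R}^{R} (V1' g1 + V2' g2) = 0`, the stronger estimate
`sup_{[-R,R]} max (|φ1|, |φ2|) ≤ C * ‖g‖_{C⁰_θ((−R,R))}` holds. -/
theorem invertibility_with_orthogonality
    (V1 V2 : ℝ → ℝ)
    (hV1smooth : ContDiff ℝ (⊤ : ℕ∞) V1) (hV2smooth : ContDiff ℝ (⊤ : ℕ∞) V2)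
    (hV1pos : ∀ x : ℝ, 0 < V1 x) (hV2pos : ∀ x : ℝ, 0 < V2 x)
    (hode1 : ∀ x : ℝ, -deriv (deriv V1) x + V1 x * (V2 x) ^ 2 = 0)
    (hode2 : ∀ x : ℝ, -deriv (deriv V2) x + V2 x * (V1 x) ^ 2 = 0)
    (hV10 : V1 0 = 1) (hV20 : V2 0 = 1)
    (hsym : ∀ x : ℝ, V1 (-x) = V2 x)
    (hmono : ∀ x : ℝ, 0 < deriv V1 x)
    (A B c0 C0 : ℝ) (hA : 0 < A) (hc0 : 0 < c0) (hC0 : 0 < C0)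
    (hasym1 : ∀ x : ℝ, 0 ≤ x → |V1 x - A * x - B| ≤ C0 * Real.exp (-c0 * x ^ 2))
    (hasym2 : ∀ x : ℝ, 0 ≤ x → |deriv V1 x - A| ≤ C0 * Real.exp (-c0 * x ^ 2))
    (hasym3 : ∀ x : ℝ, 0 ≤ x → |deriv (deriv V1) x| ≤ C0 * Real.exp (-c0 * x ^ 2))
    (hasym4 : ∀ x : ℝ, x ≤ 0 →
      |V1 x| + |deriv V1 x| + |deriv (deriv V1) x| ≤ C0 * Real.exp (-c0 * x ^ 2))
    (hnondeg : ∀ ψ1 ψ2 : ℝ → ℝ, ContDiff ℝ 2 ψ1 → ContDiff ℝ 2 ψ2 →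
      (∃ Cb : ℝ, ∀ x : ℝ, |ψ1 x| ≤ Cb ∧ |ψ2 x| ≤ Cb) →
      (∀ x : ℝ, -deriv (deriv ψ1) x + (V2 x) ^ 2 * ψ1 x + 2 * V1 x * V2 x * ψ2 x = 0) →
      (∀ x : ℝ, -deriv (deriv ψ2) x + (V1 x) ^ 2 * ψ2 x + 2 * V1 x * V2 x * ψ1 x = 0) →
      ∃ lam : ℝ, (∀ x : ℝ, ψ1 x = lam * deriv V1 x) ∧ (∀ x : ℝ, ψ2 x = lam * deriv V2 x))
    (θ : ℝ) (hθ : 0 < θ) :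
    ∃ C R₀ ω₀ P₀ : ℝ, 0 < C ∧ 0 < R₀ ∧ 0 < ω₀ ∧ 0 < P₀ ∧
      ∀ R ω : ℝ, R₀ < R → ω ∈ Set.Ioo 0 ω₀ → P₀ < ω * R →
      ∀ φ1 φ2 g1 g2 : ℝ → ℝ,
        ContDiffOn ℝ 2 φ1 (Set.Icc (-R) R) → ContDiffOn ℝ 2 φ2 (Set.Icc (-R) R) →
        ContinuousOn g1 (Set.Icc (-R) R) → ContinuousOn g2 (Set.Icc (-R) R) →
        φ1 (-R) = 0 → φ1 R = 0 → φ2 (-R) = 0 → φ2 R = 0 →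
        (∀ x ∈ Set.Ioo (-R) R,
          -deriv (deriv φ1) x + ((V2 x) ^ 2 + ω ^ 2) * φ1 x + 2 * V1 x * V2 x * φ2 x = g1 x ∧
          -deriv (deriv φ2) x + ((V1 x) ^ 2 + ω ^ 2) * φ2 x + 2 * V1 x * V2 x * φ1 x = g2 x) →
        (∫ x in (-R)..R, (deriv V1 x * g1 x + deriv V2 x * g2 x)) = 0 →
        ∀ G : ℝ, (∀ x ∈ Set.Ioo (-R) R, max |g1 x| |g2 x| * Real.cosh (θ * x) ≤ G) →
        ∀ x ∈ Set.Icc (-R) R, max |φ1 x| |φ2 x| ≤ C * G := by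
  have hmono2 : ∀ x, deriv V2 x < 0 := fun x ↦ by
    rw [← funext hsym, deriv_comp_neg]
    exact neg_lt_zero.2 (hmono (-x))
  have htwo : ((2 : ℕ∞) : WithTop ℕ∞) ≤ (⊤ : ℕ∞) := mod_cast le_top
  obtain ⟨C, hC, hbound⟩ := invertibility_with_orthogonality_general (hV1smooth.of_le htwo)
    (hV2smooth.of_le htwo) hV1pos hV2pos hode1 hode2 hmono hmono2 hθ
  exact ⟨C, 1, 1, 1, hC, one_pos, one_pos, one_pos, fun R ω hR _ _ ↦
    hbound R ω (one_pos.trans hR)⟩
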